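/- arXiv:2106.03448 — 8 statements merged into one kernel-verified Lean document; each statement's English description precedes it below -/
import Mathlib

section
/- Let A : D(A) ⊂ H₀ → H₁ be a densely defined closed linear operator between Hilbert spaces with Hilbert space adjoint A*. If c > 0 satisfies ‖x‖_{H₀} ≤ c‖Ax‖_{H₁} for all x ∈ D(A) ∩ N(A)^⊥, then the same constant works for the adjoint: ‖y‖_{H₁} ≤ c‖A*y‖_{H₀} for all y ∈ D(A*) ∩ N(A*)^⊥. In particular the best Friedrichs constants of A and A* coincide. -/
/-!
The kernel `N(A*)` is the orthogonal complement of the range `R(A)`, so `N(A*)ᗮ` is the closure of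
`R(A)`. Since `A` is closed, so is `N(A)`, and projecting `x ∈ D(A)` onto `N(A)ᗮ` gives
`x' ∈ D(A) ∩ N(A)ᗮ` with `A x' = A x`. Hence, for `y ∈ D(A*)`,
`|⟨A x, y⟩| = |⟨x', A* y⟩| ≤ c ‖A x‖ ‖A* y‖`, that is `|⟨z, y⟩| ≤ c ‖z‖ ‖A* y‖` for `z ∈ R(A)`
and, by continuity, for `z` in the closure of `R(A)`. For `y ∈ N(A*)ᗮ` one may take `z = y`.
-/

open Filter Topology

noncomputable section

/-- The kernel `N(A)` of a partially defined linear operator `A`, as a submodule of the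
ambient space. -/
def LinearPMap.kerSub {𝕜 E F : Type*} [RCLike 𝕜] [NormedAddCommGroup E]
    [InnerProductSpace 𝕜 E] [NormedAddCommGroup F] [InnerProductSpace 𝕜 F]
    (A : E →ₗ.[𝕜] F) : Submodule 𝕜 E :=
  (LinearMap.ker A.toFun).map A.domain.subtype

section Helpers

variable {𝕜 H₀ H₁ : Type*} [RCLike 𝕜] [NormedAddCommGroup H₀] [InnerProductSpace 𝕜 H₀]
  [NormedAddCommGroup H₁] [InnerProductSpace 𝕜 H₁]

lemma LinearPMap.mem_kerSub_iff (A : H₀ →ₗ.[𝕜] H₁) (x : H₀) :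
    x ∈ A.kerSub ↔ ∃ h : x ∈ A.domain, A ⟨x, h⟩ = 0 := by
  simp only [LinearPMap.kerSub, Submodule.mem_map, LinearMap.mem_ker]
  constructor
  · rintro ⟨z, hz, rfl⟩
    exact ⟨z.2, hz⟩
  · rintro ⟨h, hx⟩
    exact ⟨⟨x, h⟩, hx, rfl⟩

lemma LinearPMap.isClosed_kerSub (A : H₀ →ₗ.[𝕜] H₁) (hclosed : A.IsClosed) :
    _root_.IsClosed (A.kerSub : Set H₀) := by
  -- `N(A)` is the preimage of the graph under `x ↦ (x, 0)`.
  have h : (A.kerSub : Set H₀) = (fun x : H₀ => (x, (0 : H₁))) ⁻¹' (A.graph : Set (H₀ × H₁)) := by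
    ext x
    simp [LinearPMap.mem_kerSub_iff, LinearPMap.mem_graph_iff]
  rw [h]
  exact _root_.IsClosed.preimage (by fun_prop) hclosed

/-- Every value of a closed operator `A` is attained on `D(A) ∩ N(A)ᗮ`. -/
lemma LinearPMap.exists_mem_kerSub_orthogonal [CompleteSpace H₀] (A : H₀ →ₗ.[𝕜] H₁)
    (hclosed : A.IsClosed) (x : A.domain) :
    ∃ x' : A.domain, (x' : H₀) ∈ (A.kerSub)ᗮ ∧ A x' = A x := by
  have : CompleteSpace A.kerSub := (A.isClosed_kerSub hclosed).completeSpace_coe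
  obtain ⟨n, hn, m, hm, hx⟩ := A.kerSub.exists_add_mem_mem_orthogonal (x : H₀)
  obtain ⟨hnd, hn0⟩ := (A.mem_kerSub_iff n).1 hn
  refine ⟨x - ⟨n, hnd⟩, ?_, ?_⟩
  · simpa [hx] using hm
  · rw [LinearPMap.map_sub, hn0, sub_zero]

lemma LinearPMap.range_orthogonal_le_kerSub_adjoint [CompleteSpace H₀] (A : H₀ →ₗ.[𝕜] H₁)
    (hdense : Dense (A.domain : Set H₀)) :
    (LinearMap.range A.toFun)ᗮ ≤ A.adjoint.kerSub := by
  intro y hy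
  have h0 : ∀ x : A.domain, inner 𝕜 (0 : H₀) (x : H₀) = inner 𝕜 y (A x) := fun x => by
    rw [inner_zero_left]
    exact ((Submodule.mem_orthogonal' _ _).1 hy _ ⟨x, rfl⟩).symm
  exact (A.adjoint.mem_kerSub_iff y).2 ⟨LinearPMap.mem_adjoint_domain_of_exists y ⟨0, h0⟩,
    LinearPMap.adjoint_apply_eq hdense _ h0⟩

end Helpers

/-- If a densely defined closed operator `A` satisfies the Friedrichs/Poincaré
estimate with constant `c` on `D(A) ∩ N(A)^⊥`, then the Hilbert space adjoint `A*` satisfies the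
corresponding estimate with the same constant `c` on `D(A*) ∩ N(A*)^⊥`. -/
theorem friedrichs_estimate_adjoint
    {𝕜 H₀ H₁ : Type*} [RCLike 𝕜]
    [NormedAddCommGroup H₀] [InnerProductSpace 𝕜 H₀] [CompleteSpace H₀]
    [NormedAddCommGroup H₁] [InnerProductSpace 𝕜 H₁] [CompleteSpace H₁]
    (A : H₀ →ₗ.[𝕜] H₁) (hdense : Dense (A.domain : Set H₀)) (hclosed : A.IsClosed)
    (c : ℝ) (hc : 0 < c)
    (hest : ∀ x : A.domain, (x : H₀) ∈ (A.kerSub)ᗮ → ‖(x : H₀)‖ ≤ c * ‖A x‖) :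
    ∀ y : A.adjoint.domain, (y : H₁) ∈ (A.adjoint.kerSub)ᗮ →
      ‖(y : H₁)‖ ≤ c * ‖A.adjoint y‖ := by
  intro y hy
  have hbound : ∀ z ∈ LinearMap.range A.toFun,
      ‖inner 𝕜 z (y : H₁)‖ ≤ c * ‖z‖ * ‖A.adjoint y‖ := by
    rintro _ ⟨x, rfl⟩
    obtain ⟨x', hx', hAx⟩ := A.exists_mem_kerSub_orthogonal hclosed x
    change ‖inner 𝕜 (A x) (y : H₁)‖ ≤ c * ‖A x‖ * ‖A.adjoint y‖
    rw [← hAx, (LinearPMap.adjoint_isFormalAdjoint hdense).symm x' y]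
    exact (norm_inner_le_norm _ _).trans
      (mul_le_mul_of_nonneg_right (hest x' hx') (norm_nonneg _))
  have hmem : (y : H₁) ∈ closure (LinearMap.range A.toFun : Set H₁) := by
    rw [← Submodule.topologicalClosure_coe, ← Submodule.orthogonal_orthogonal_eq_closure]
    exact Submodule.orthogonal_le (A.range_orthogonal_le_kerSub_adjoint hdense) hy
  have hyy : ‖inner 𝕜 (y : H₁) (y : H₁)‖ ≤ c * ‖(y : H₁)‖ * ‖A.adjoint y‖ :=
    closure_minimal (t := {z : H₁ | ‖inner 𝕜 z (y : H₁)‖ ≤ c * ‖z‖ * ‖A.adjoint y‖}) hbound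
      (isClosed_le (by fun_prop) (by fun_prop)) hmem
  rw [inner_self_eq_norm_sq_to_K, norm_pow, RCLike.norm_ofReal, abs_norm] at hyy
  rcases (norm_nonneg (y : H₁)).eq_or_lt with h | h
  · rw [← h]
    positivity
  · exact le_of_mul_le_mul_left (by linarith) h
end
end

section
/- Let A : D(A) ⊂ H₀ → H₁ be a densely defined closed linear operator between Hilbert spaces with Hilbert space adjoint A*. Then the embedding D(A) ∩ N(A)^⊥ ↪ H₀ is compact (every sequence (xₙ) in D(A) ∩ N(A)^⊥ with ‖xₙ‖_{H₀} + ‖Axₙ‖_{H₁} bounded has a subsequence converging in H₀) if and only if the embedding D(A*) ∩ N(A*)^⊥ ↪ H₁ is compact (every sequence (yₙ) in D(A*) ∩ N(A*)^⊥ with ‖yₙ‖_{H₁} + ‖A*yₙ‖_{H₀} bounded has a subsequence converging in H₁). -/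
/-!
The two implications are instances of one transfer principle for a pair `T : E → F`, `S : F → E`
with `⟪T x, y⟫ = ⟪x, S y⟫`, `T` closed and `R(T)ᗮ ⊆ N(S)`. If the reduced embedding of `T` is
compact, then a normalisation argument gives the Poincaré-type estimate `‖x‖ ≤ c ‖T x‖` on
`D(T) ∩ N(T)ᗮ`. A graph-bounded sequence `yₙ` in `D(S) ∩ N(S)ᗮ` lies in the closure of `R(T)`, so
`yₙ` is up to `1 / (n + 1)` equal to `T xₙ` with `xₙ ∈ D(T) ∩ N(T)ᗮ`, and the estimate makes `xₙ`
graph-bounded. Along a subsequence on which `xₙ` converges, `yₙ` is Cauchy because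
`‖yₙ - yₘ‖² = ⟪xₙ - xₘ, S (yₙ - yₘ)⟫ + o(1)`.

For `(T, S) = (A, A*)` the inclusion `R(A)ᗮ ⊆ N(A*)` is immediate; for `(T, S) = (A*, A)` the
inclusion `R(A*)ᗮ ⊆ N(A)` holds because the closed graph of `A` equals its double orthogonal
complement in the Hilbert space `H₀ × H₁`.
-/

open Filter Topology

noncomputable section

/-- The embedding `D(A) ∩ N(A)^⊥ ↪ E` (with the graph norm on the domain) is compact: every
sequence in `D(A) ∩ N(A)^⊥` that is bounded in the graph norm has a subsequence converging
in `E`. -/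
def LinearPMap.CompactRedEmbedding {𝕜 E F : Type*} [RCLike 𝕜] [NormedAddCommGroup E]
    [InnerProductSpace 𝕜 E] [NormedAddCommGroup F] [InnerProductSpace 𝕜 F]
    (A : E →ₗ.[𝕜] F) : Prop :=
  ∀ x : ℕ → A.domain, (∀ n, ((x n : E) ∈ (A.kerSub)ᗮ)) →
    (∃ C : ℝ, ∀ n, ‖(x n : E)‖ + ‖A (x n)‖ ≤ C) →
    ∃ φ : ℕ → ℕ, StrictMono φ ∧
      ∃ l : E, Filter.Tendsto (fun n => (x (φ n) : E)) Filter.atTop (nhds l)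

namespace LinearPMap

variable {𝕜 E F : Type*} [RCLike 𝕜] [NormedAddCommGroup E] [InnerProductSpace 𝕜 E]
  [NormedAddCommGroup F] [InnerProductSpace 𝕜 F]

theorem mem_kerSub_iff_s4 (T : E →ₗ.[𝕜] F) (x : E) :
    x ∈ T.kerSub ↔ ∃ h : x ∈ T.domain, T ⟨x, h⟩ = 0 := by
  simp [kerSub]

theorem mem_kerSub_iff_graph (T : E →ₗ.[𝕜] F) (x : E) :
    x ∈ T.kerSub ↔ (x, (0 : F)) ∈ T.graph := by
  rw [mem_kerSub_iff_s4, mem_graph_iff]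
  constructor
  · rintro ⟨h, h0⟩
    exact ⟨⟨x, h⟩, rfl, h0⟩
  · rintro ⟨y, hy, h0⟩
    obtain rfl : (y : E) = x := hy
    exact ⟨y.2, h0⟩

theorem isClosed_kerSub_s4 {T : E →ₗ.[𝕜] F} (hT : T.IsClosed) :
    _root_.IsClosed (T.kerSub : Set E) := by
  have h : (T.kerSub : Set E) = (fun x : E => (x, (0 : F))) ⁻¹' (T.graph : Set (E × F)) := by
    ext x
    exact mem_kerSub_iff_graph T x
  rw [h]
  exact _root_.IsClosed.preimage (by fun_prop) hT

/-- Compactness of the reduced embedding yields a Poincaré-type estimate on `D(T) ∩ N(T)ᗮ`: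
otherwise some normalised sequence with `T uₙ → 0` would converge to a unit vector in
`N(T) ∩ N(T)ᗮ`. -/
theorem CompactRedEmbedding.exists_norm_le {T : E →ₗ.[𝕜] F} (hT : T.IsClosed)
    (hc : T.CompactRedEmbedding) :
    ∃ c : ℝ, 0 ≤ c ∧ ∀ x : T.domain, (x : E) ∈ T.kerSubᗮ → ‖(x : E)‖ ≤ c * ‖T x‖ := by
  by_contra! hcon
  choose x hxmem hx using fun n : ℕ => hcon ((n : ℝ) + 1) (by positivity)
  have hpos : ∀ n, 0 < ‖(x n : E)‖ := fun n => lt_of_le_of_lt (by positivity) (hx n)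
  set u : ℕ → T.domain := fun n => (((‖(x n : E)‖⁻¹ : ℝ)) : 𝕜) • x n with hu
  have hu1 : ∀ n, ‖(u n : E)‖ = 1 := by
    intro n
    simp only [hu, Submodule.coe_smul, norm_smul, RCLike.norm_ofReal, abs_inv, abs_norm]
    exact inv_mul_cancel₀ (hpos n).ne'
  have hTu : ∀ n : ℕ, ‖T (u n)‖ ≤ 1 / ((n : ℝ) + 1) := by
    intro n
    simp only [hu, LinearPMap.map_smul, norm_smul, RCLike.norm_ofReal, abs_inv, abs_norm]
    rw [le_div_iff₀ (by positivity), mul_assoc, inv_mul_le_iff₀ (hpos n)]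
    linarith [hx n]
  have humem : ∀ n, (u n : E) ∈ T.kerSubᗮ := fun n => Submodule.smul_mem _ _ (hxmem n)
  obtain ⟨φ, hφ, l, hl⟩ := hc u humem ⟨2, fun n => by
    have h1 : 1 / ((n : ℝ) + 1) ≤ 1 := by
      rw [div_le_one (by positivity)]
      linarith [(Nat.cast_nonneg n : (0 : ℝ) ≤ n)]
    linarith [hu1 n, hTu n]⟩
  have hT0 : Tendsto (fun n => T (u (φ n))) atTop (𝓝 0) :=
    (squeeze_zero_norm hTu tendsto_one_div_add_atTop_nhds_zero_nat).comp hφ.tendsto_atTop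
  have hker : l ∈ T.kerSub := (mem_kerSub_iff_graph T l).2 <|
    _root_.IsClosed.mem_of_tendsto hT (hl.prodMk_nhds hT0)
      (Eventually.of_forall fun n => T.mem_graph (u (φ n)))
  have hperp : l ∈ T.kerSubᗮ :=
    T.kerSub.isClosed_orthogonal.mem_of_tendsto hl (Eventually.of_forall fun n => humem (φ n))
  have hl0 : l = 0 := by
    have h := T.kerSub.inf_orthogonal_eq_bot
    exact (Submodule.mem_bot 𝕜).1 (h ▸ Submodule.mem_inf.2 ⟨hker, hperp⟩)
  have hl1 : ‖l‖ = 1 := by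
    refine tendsto_nhds_unique hl.norm ?_
    simp [hu1]
  simp [hl0] at hl1

/-- Removing the `N(T)`-component of `x` does not change `T x`. -/
theorem exists_mem_orthogonal_kerSub [CompleteSpace E] {T : E →ₗ.[𝕜] F} (hT : T.IsClosed)
    (x : T.domain) : ∃ x' : T.domain, (x' : E) ∈ T.kerSubᗮ ∧ T x' = T x := by
  have : CompleteSpace T.kerSub := (isClosed_kerSub_s4 hT).completeSpace_coe
  obtain ⟨h, h0⟩ := (mem_kerSub_iff_s4 T _).1 (T.kerSub.starProjection_apply_mem (x : E))
  refine ⟨x - ⟨_, h⟩, ?_, ?_⟩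
  · exact T.kerSub.sub_starProjection_mem_orthogonal (x : E)
  · rw [LinearPMap.map_sub, h0, sub_zero]

/-- Approximation of `N(S)ᗮ` by the range of `T`, for `R(T)ᗮ ⊆ N(S)`. -/
theorem exists_norm_sub_lt [CompleteSpace F] {T : E →ₗ.[𝕜] F} {S : F →ₗ.[𝕜] E}
    (hker : ∀ y : F, (∀ x : T.domain, inner 𝕜 (T x) y = 0) → y ∈ S.kerSub)
    {y : F} (hy : y ∈ S.kerSubᗮ) {ε : ℝ} (hε : 0 < ε) : ∃ x : T.domain, ‖y - T x‖ < ε := by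
  have hle : (LinearMap.range T.toFun)ᗮ ≤ S.kerSub := fun z hz =>
    hker z fun x => (Submodule.mem_orthogonal _ _).1 hz _ ⟨x, rfl⟩
  have hmem : y ∈ (LinearMap.range T.toFun).topologicalClosure := by
    rw [← Submodule.orthogonal_orthogonal_eq_closure]
    exact Submodule.orthogonal_le hle hy
  obtain ⟨_, ⟨x, rfl⟩, hx⟩ := Metric.mem_closure_iff.1 hmem ε hε
  exact ⟨x, by simpa [dist_eq_norm] using hx⟩

/-- The transfer principle behind both implications. The condition `hker` is `R(T)ᗮ ⊆ N(S)`; it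
replaces `S = T*`, so that no biadjoint theorem is needed. -/
theorem CompactRedEmbedding.of_isFormalAdjoint [CompleteSpace E] [CompleteSpace F]
    {T : E →ₗ.[𝕜] F} {S : F →ₗ.[𝕜] E} (hT : T.IsClosed) (hTS : T.IsFormalAdjoint S)
    (hker : ∀ y : F, (∀ x : T.domain, inner 𝕜 (T x) y = 0) → y ∈ S.kerSub)
    (hc : T.CompactRedEmbedding) : S.CompactRedEmbedding := by
  rintro y hy ⟨C, hC⟩
  obtain ⟨c, hc0, hcle⟩ := hc.exists_norm_le hT
  have happrox : ∀ n : ℕ, ∃ x : T.domain, (x : E) ∈ T.kerSubᗮ ∧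
      ‖(y n : F) - T x‖ < 1 / ((n : ℝ) + 1) := by
    intro n
    obtain ⟨x, hx⟩ := exists_norm_sub_lt hker (hy n) (ε := 1 / ((n : ℝ) + 1)) (by positivity)
    obtain ⟨x', hx', hxx'⟩ := exists_mem_orthogonal_kerSub hT x
    exact ⟨x', hx', by rwa [hxx']⟩
  choose x hxmem hx using happrox
  have hTx : ∀ n, ‖T (x n)‖ ≤ C + 1 := by
    intro n
    have h1 : 1 / ((n : ℝ) + 1) ≤ 1 := by
      rw [div_le_one (by positivity)]
      linarith [(Nat.cast_nonneg n : (0 : ℝ) ≤ n)]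
    have h2 := norm_sub_norm_le (T (x n)) (y n : F)
    rw [norm_sub_rev] at h2
    linarith [hx n, hC n, norm_nonneg (S (y n))]
  obtain ⟨φ, hφ, l, hl⟩ := hc x hxmem ⟨c * (C + 1) + (C + 1), fun n =>
    add_le_add ((hcle _ (hxmem n)).trans (mul_le_mul_of_nonneg_left (hTx n) hc0)) (hTx n)⟩
  have hC0 : 0 ≤ C := le_trans (by positivity) (hC 0)
  have key : ∀ m n, ‖(y m : F) - y n‖ ^ 2 ≤
      2 * C * (‖(x m : E) - x n‖ + ‖(y m : F) - T (x m)‖ + ‖(y n : F) - T (x n)‖) := by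
    intro m n
    have hsplit : inner 𝕜 ((y m : F) - y n) ((y m : F) - y n) =
        inner 𝕜 ((x m : E) - x n) (S (y m - y n)) +
          inner 𝕜 (((y m : F) - T (x m)) - ((y n : F) - T (x n))) ((y m : F) - y n) := by
      have h := hTS (x m - x n) (y m - y n)
      simp only [Submodule.coe_sub] at h
      rw [← h, LinearPMap.map_sub, ← inner_add_left]
      congr 1
      abel
    have hyb : ‖(y m : F) - y n‖ ≤ 2 * C := by
      linarith [norm_sub_le (y m : F) (y n), hC m, hC n, norm_nonneg (S (y m)),
        norm_nonneg (S (y n))]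
    have hSb : ‖S (y m - y n)‖ ≤ 2 * C := by
      rw [LinearPMap.map_sub]
      linarith [norm_sub_le (S (y m)) (S (y n)), hC m, hC n, norm_nonneg (y m : F),
        norm_nonneg (y n : F)]
    have hsq : ‖(y m : F) - y n‖ ^ 2 = ‖inner 𝕜 ((y m : F) - y n) ((y m : F) - y n)‖ := by
      rw [inner_self_eq_norm_sq_to_K]
      simp
    calc ‖(y m : F) - y n‖ ^ 2
        ≤ ‖(x m : E) - x n‖ * ‖S (y m - y n)‖ +
          ‖((y m : F) - T (x m)) - ((y n : F) - T (x n))‖ * ‖(y m : F) - y n‖ := by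
          rw [hsq, hsplit]
          exact (norm_add_le _ _).trans (add_le_add (norm_inner_le_norm _ _)
            (norm_inner_le_norm _ _))
      _ ≤ ‖(x m : E) - x n‖ * (2 * C) +
          (‖(y m : F) - T (x m)‖ + ‖(y n : F) - T (x n)‖) * (2 * C) := by
          gcongr
          exact norm_sub_le _ _
      _ = _ := by ring
  refine ⟨φ, hφ, cauchySeq_tendsto_of_complete ?_⟩
  have herr : Tendsto (fun n => ‖(y (φ n) : F) - T (x (φ n))‖) atTop (𝓝 0) :=
    (squeeze_zero (fun n => norm_nonneg _) (fun n => (hx n).le)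
      tendsto_one_div_add_atTop_nhds_zero_nat).comp hφ.tendsto_atTop
  rw [Metric.cauchySeq_iff]
  intro ε hε
  -- With each of the three terms below `δ`, the key bound is at most `6 C δ < ε ^ 2`.
  set δ : ℝ := ε ^ 2 / (6 * C + 1) with hδ
  have hδ0 : 0 < δ := by positivity
  obtain ⟨N₁, hN₁⟩ := Metric.cauchySeq_iff.1 hl.cauchySeq δ hδ0
  obtain ⟨N₂, hN₂⟩ := eventually_atTop.1 (herr.eventually_lt_const hδ0)
  refine ⟨max N₁ N₂, fun m hm n hn => ?_⟩
  have h1 := hN₁ m (le_of_max_le_left hm) n (le_of_max_le_left hn)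
  have h2 := hN₂ m (le_of_max_le_right hm)
  have h3 := hN₂ n (le_of_max_le_right hn)
  rw [dist_eq_norm] at h1 ⊢
  have hδε : δ * (6 * C + 1) = ε ^ 2 := div_mul_cancel₀ _ (by positivity)
  refine lt_of_pow_lt_pow_left₀ 2 hε.le ?_
  calc ‖(y (φ m) : F) - y (φ n)‖ ^ 2 ≤ _ := key (φ m) (φ n)
    _ ≤ 2 * C * (δ + δ + δ) := by gcongr
    _ < ε ^ 2 := by linarith

theorem mem_kerSub_adjoint_of_inner_eq_zero [CompleteSpace E] {A : E →ₗ.[𝕜] F}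
    (hA : Dense (A.domain : Set E)) (y : F) (hy : ∀ x : A.domain, inner 𝕜 (A x) y = 0) :
    y ∈ A.adjoint.kerSub := by
  rw [mem_kerSub_iff_graph, adjoint_graph_eq_graph_adjoint hA, Submodule.mem_adjoint_iff]
  intro a b hab
  obtain ⟨x, rfl, rfl⟩ := A.mem_graph_iff.1 hab
  simpa using hy x

/-- `R(A*)ᗮ ⊆ N(A)` for closed `A`: if `x ⊥ R(A*)`, then `(x, 0)` is orthogonal to the orthogonal
complement of the graph of `A`, which consists of the pairs `(-A* v, v)`; hence `(x, 0)` lies in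
the graph. -/
theorem mem_kerSub_of_inner_adjoint_eq_zero [CompleteSpace E] [CompleteSpace F]
    {A : E →ₗ.[𝕜] F} (hA : Dense (A.domain : Set E)) (hcl : A.IsClosed) (x : E)
    (hx : ∀ y : A.adjoint.domain, inner 𝕜 (A.adjoint y) x = 0) : x ∈ A.kerSub := by
  rw [mem_kerSub_iff_graph]
  set G : Submodule 𝕜 (WithLp 2 (E × F)) :=
    A.graph.comap (WithLp.linearEquiv 2 𝕜 (E × F)).toLinearMap with hG
  have hGcl : _root_.IsClosed (G : Set (WithLp 2 (E × F))) :=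
    _root_.IsClosed.preimage (WithLp.prod_continuous_ofLp 2 E F) hcl
  have : CompleteSpace G := hGcl.completeSpace_coe
  suffices h : WithLp.toLp 2 (x, (0 : F)) ∈ Gᗮᗮ by
    rw [Submodule.orthogonal_orthogonal] at h
    exact h
  rw [Submodule.mem_orthogonal]
  intro w hw
  have hgraph : (w.snd, -w.fst) ∈ A.adjoint.graph := by
    rw [adjoint_graph_eq_graph_adjoint hA, Submodule.mem_adjoint_iff]
    intro a b hab
    have h := (Submodule.mem_orthogonal _ _).1 hw (WithLp.toLp 2 (a, b)) hab
    simp only [WithLp.prod_inner_apply] at h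
    simpa [add_comm] using h
  obtain ⟨v, -, hv⟩ := A.adjoint.mem_graph_iff.1 hgraph
  have h := hx v
  rw [hv] at h
  simpa [WithLp.prod_inner_apply] using h

end LinearPMap

/-- For a densely defined closed operator `A` between Hilbert spaces, the
embedding `D(A) ∩ N(A)^⊥ ↪ H₀` is compact if and only if the embedding
`D(A*) ∩ N(A*)^⊥ ↪ H₁` is compact. -/
theorem compactRedEmbedding_iff_adjoint
    {𝕜 H₀ H₁ : Type*} [RCLike 𝕜]
    [NormedAddCommGroup H₀] [InnerProductSpace 𝕜 H₀] [CompleteSpace H₀]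
    [NormedAddCommGroup H₁] [InnerProductSpace 𝕜 H₁] [CompleteSpace H₁]
    (A : H₀ →ₗ.[𝕜] H₁) (hdense : Dense (A.domain : Set H₀)) (hclosed : A.IsClosed) :
    A.CompactRedEmbedding ↔ A.adjoint.CompactRedEmbedding := by
  exact ⟨fun h => h.of_isFormalAdjoint hclosed (LinearPMap.adjoint_isFormalAdjoint hdense).symm
      (LinearPMap.mem_kerSub_adjoint_of_inner_eq_zero hdense),
    fun h => h.of_isFormalAdjoint (LinearPMap.adjoint_isClosed hdense)
      (LinearPMap.adjoint_isFormalAdjoint hdense)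
      (LinearPMap.mem_kerSub_of_inner_adjoint_eq_zero hdense hclosed)⟩
end
end

section
/- Let A : D(A) ⊂ H₀ → H₁ be a densely defined closed linear operator between Hilbert spaces. For y ∈ R(A) let A_⊥⁻¹ y denote the unique x ∈ D(A) ∩ N(A)^⊥ with Ax = y. Then the embedding D(A) ∩ N(A)^⊥ ↪ H₀ is compact (every sequence in D(A) ∩ N(A)^⊥ bounded in the graph norm ‖x‖_{H₀} + ‖Ax‖_{H₁} has a subsequence converging in H₀) if and only if A_⊥⁻¹ : R(A) → H₀ is a compact operator (every bounded sequence (yₙ) in R(A) has a subsequence along which A_⊥⁻¹ yₙ converges in H₀). -/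
/-!
On `D(A) ∩ N(A)^⊥` the operator `A` is injective, so a sequence `xₙ` there is recovered as
`Ainv (A xₙ)`; this gives compactness of the embedding from compactness of `Ainv`.
For the converse, a sequence `yₙ` bounded in `R(A)` must yield `Ainv yₙ` bounded in the graph
norm. This is the Poincaré-type estimate `‖x‖ ≤ c ‖A x‖` on `D(A) ∩ N(A)^⊥`: if it failed, there
would be unit vectors `xₙ` with `A xₙ → 0`, a subsequence of which converges by compactness to
a unit vector `l`; since `A` is closed, `l ∈ N(A) ∩ N(A)^⊥ = 0`, a contradiction.
-/

open Filter Topology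

noncomputable section

section Helpers

variable {𝕜 H₀ H₁ : Type*} [RCLike 𝕜] [NormedAddCommGroup H₀] [InnerProductSpace 𝕜 H₀]
  [NormedAddCommGroup H₁] [InnerProductSpace 𝕜 H₁] {A : H₀ →ₗ.[𝕜] H₁}

lemma LinearPMap.eq_zero_of_mem_kerSub_orthogonal {x : A.domain}
    (hx : (x : H₀) ∈ (A.kerSub)ᗮ) (hA : A x = 0) : (x : H₀) = 0 := by
  have hker : (x : H₀) ∈ A.kerSub := ⟨x, hA, rfl⟩
  exact inner_self_eq_zero.mp ((Submodule.mem_orthogonal _ _).mp hx _ hker)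

/-- Poincaré-type estimate: if the reduced embedding of a closed operator is compact, then the
reduced operator is bounded below. -/
lemma LinearPMap.CompactRedEmbedding.exists_norm_le_s5 (hclosed : A.IsClosed)
    (hc : A.CompactRedEmbedding) :
    ∃ c : ℝ, ∀ x : A.domain, (x : H₀) ∈ (A.kerSub)ᗮ → ‖(x : H₀)‖ ≤ c * ‖A x‖ := by
  by_contra! hcon
  choose x hx hlt using fun n : ℕ => hcon (n + 1)
  have hpos : ∀ n, 0 < ‖(x n : H₀)‖ := fun n => lt_of_le_of_lt (by positivity) (hlt n)
  -- Normalize to unit vectors `u n`, for which `‖A (u n)‖ ≤ 1 / (n + 1)`.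
  let u : ℕ → A.domain := fun n => ((‖(x n : H₀)‖⁻¹ : ℝ) : 𝕜) • x n
  have hu : ∀ n, (u n : H₀) ∈ (A.kerSub)ᗮ := fun n => Submodule.smul_mem _ _ (hx n)
  have hnorm : ∀ n, ‖(u n : H₀)‖ = 1 := fun n => by
    simp only [u, Submodule.coe_smul, norm_smul, RCLike.norm_ofReal, abs_inv, abs_norm]
    exact inv_mul_cancel₀ (hpos n).ne'
  have hAu : ∀ n, ‖A (u n)‖ ≤ 1 / ((n : ℝ) + 1) := fun n => by
    simp only [u, LinearPMap.map_smul, norm_smul, RCLike.norm_ofReal, abs_inv, abs_norm]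
    rw [inv_mul_le_iff₀ (hpos n), mul_one_div, le_div_iff₀ (by positivity), mul_comm]
    exact (hlt n).le
  have hbdd : ∀ n, ‖(u n : H₀)‖ + ‖A (u n)‖ ≤ 2 := fun n => by
    have h1 : 1 / ((n : ℝ) + 1) ≤ 1 := by
      rw [div_le_one (by positivity)]
      linarith [n.cast_nonneg (α := ℝ)]
    linarith [hnorm n, hAu n]
  obtain ⟨φ, hφ, l, hl⟩ := hc u hu ⟨2, hbdd⟩
  have hA0 : Tendsto (fun n => A (u (φ n))) atTop (𝓝 0) :=
    (squeeze_zero_norm hAu tendsto_one_div_add_atTop_nhds_zero_nat).comp hφ.tendsto_atTop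
  have hgraph : (l, (0 : H₁)) ∈ A.graph :=
    _root_.IsClosed.mem_of_tendsto hclosed (hl.prodMk_nhds hA0)
      (Eventually.of_forall fun n => A.mem_graph (u (φ n)))
  obtain ⟨z, hz, hAz⟩ := (LinearPMap.mem_graph_iff A).mp hgraph
  have hlperp : l ∈ (A.kerSub)ᗮ :=
    (Submodule.isClosed_orthogonal _).mem_of_tendsto hl (Eventually.of_forall fun n => hu (φ n))
  have hl0 : l = 0 := by
    subst hz
    exact LinearPMap.eq_zero_of_mem_kerSub_orthogonal hlperp hAz
  have hl1 : ‖l‖ = 1 :=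
    tendsto_nhds_unique hl.norm (by simp only [hnorm]; exact tendsto_const_nhds)
  simp [hl0] at hl1

end Helpers

/-- Let `A` be densely defined and closed and let `Ainv` be the inverse of the
reduced operator, i.e. for every `y ∈ R(A)` the element `Ainv y` is the unique
`x ∈ D(A) ∩ N(A)^⊥` with `A x = y`.  Then the embedding `D(A) ∩ N(A)^⊥ ↪ H₀` is compact if and
only if `Ainv : R(A) → H₀` is a compact operator. -/
theorem compactRedEmbedding_iff_compact_inverse
    {𝕜 H₀ H₁ : Type*} [RCLike 𝕜]
    [NormedAddCommGroup H₀] [InnerProductSpace 𝕜 H₀] [CompleteSpace H₀]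
    [NormedAddCommGroup H₁] [InnerProductSpace 𝕜 H₁] [CompleteSpace H₁]
    (A : H₀ →ₗ.[𝕜] H₁) (hdense : Dense (A.domain : Set H₀)) (hclosed : A.IsClosed)
    (Ainv : LinearMap.range A.toFun → H₀)
    (hAinv : ∀ y : LinearMap.range A.toFun, ∃ h : Ainv y ∈ A.domain,
      Ainv y ∈ (A.kerSub)ᗮ ∧ A ⟨Ainv y, h⟩ = (y : H₁)) :
    A.CompactRedEmbedding ↔
      (∀ y : ℕ → LinearMap.range A.toFun, (∃ C : ℝ, ∀ n, ‖(y n : H₁)‖ ≤ C) →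
        ∃ φ : ℕ → ℕ, StrictMono φ ∧
          ∃ l : H₀, Tendsto (fun n => Ainv (y (φ n))) atTop (𝓝 l)) := by
  constructor
  · rintro hc y ⟨C, hC⟩
    obtain ⟨c, hc'⟩ := hc.exists_norm_le_s5 hclosed
    choose hdom hperp hA using hAinv
    refine hc (fun n => ⟨Ainv (y n), hdom (y n)⟩) (fun n => hperp (y n)) ⟨|c| * C + C, fun n => ?_⟩
    have h := hc' ⟨Ainv (y n), hdom (y n)⟩ (hperp (y n))
    rw [hA] at h ⊢
    -- The constant `c` may be negative, so it is replaced by `|c|`.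
    have h2 : c * ‖(y n : H₁)‖ ≤ |c| * C :=
      mul_le_mul (le_abs_self c) (hC n) (norm_nonneg _) (abs_nonneg c)
    linarith [hC n]
  · rintro hK x hx ⟨C, hC⟩
    let y : ℕ → LinearMap.range A.toFun := fun n => ⟨A (x n), x n, rfl⟩
    have hinv : ∀ n, Ainv (y n) = x n := fun n => by
      obtain ⟨h, hperp, hA⟩ := hAinv (y n)
      have h0 : A (⟨Ainv (y n), h⟩ - x n) = 0 := by
        rw [LinearPMap.map_sub, hA, sub_self]
      exact sub_eq_zero.mp
        (LinearPMap.eq_zero_of_mem_kerSub_orthogonal (Submodule.sub_mem _ hperp (hx n)) h0)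
    obtain ⟨φ, hφ, l, hl⟩ := hK y ⟨C, fun n => by
      have := hC n
      have := norm_nonneg (x n : H₀)
      change ‖A (x n)‖ ≤ C
      linarith⟩
    exact ⟨φ, hφ, l, by simpa only [hinv] using hl⟩
end
end

section
/- Let A₀ : D(A₀) ⊂ H₀ → H₁ and A₁ : D(A₁) ⊂ H₁ → H₂ be densely defined closed linear operators between Hilbert spaces satisfying R(A₀) ⊂ N(A₁). If the embedding D(A₁) ∩ D(A₀*) ↪ H₁ is compact, then the ranges R(A₀), R(A₀*), R(A₁), R(A₁*) are all closed, and the cohomology group N_{0,1} := N(A₁) ∩ N(A₀*) is finite-dimensional. -/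
/-!
Everything follows from two Poincaré-type estimates, `‖x‖ ≤ c ‖A₁ x‖` on `D(A₁) ∩ N(A₁)ᗮ` and
`‖x‖ ≤ c ‖A₀* x‖` on `D(A₀*) ∩ N(A₀*)ᗮ`. The complex property gives `N(A₁)ᗮ ⊆ N(A₀*)` and
`N(A₀*)ᗮ ⊆ N(A₁)`, so on each of these sets one of the two operators in the compactness hypothesis
vanishes, and a normalised sequence violating the estimate would subconverge to a unit vector in
`N ∩ Nᗮ = 0` (`FAT.exists_estimate`).

For a closed operator `T` the estimate makes `R(T)` closed (`FAT.isClosed_range`). It also shows,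
by Hahn-Banach and the Riesz representation theorem, that for every `y ∈ N(T)ᗮ` the functional
`⟪y, ·⟫` on `D(T)` has the form `⟪z, T ·⟫` (`FAT.exists_preimage`). With `T = A₁` this says
`R(A₁*) = N(A₁)ᗮ`; with `T = A₀*`, together with `A₀** = A₀` (`FAT.mem_graph_of_adjoint`), it says
`R(A₀) = N(A₀*)ᗮ`. Orthogonal complements are closed.

Finally, on `N(A₁) ∩ N(A₀*)` both operators vanish, so its unit ball is compact and Riesz's theorem
gives finite dimension.
-/

open Filter Topology

noncomputable section

namespace FAT

variable {𝕜 E F : Type*} [RCLike 𝕜] [NormedAddCommGroup E] [InnerProductSpace 𝕜 E]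
  [NormedAddCommGroup F] [InnerProductSpace 𝕜 F]

open scoped InnerProductSpace

lemma mem_kerSub {T : E →ₗ.[𝕜] F} {x : E} :
    x ∈ T.kerSub ↔ ∃ h : x ∈ T.domain, T ⟨x, h⟩ = 0 := by
  simp only [LinearPMap.kerSub, Submodule.mem_map, LinearMap.mem_ker, Submodule.subtype_apply,
    Subtype.exists, exists_and_right, exists_eq_right]
  rfl

lemma mem_kerSub_iff_graph {T : E →ₗ.[𝕜] F} {x : E} :
    x ∈ T.kerSub ↔ (x, (0 : F)) ∈ T.graph := by
  rw [mem_kerSub, LinearPMap.mem_graph_iff]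
  constructor
  · rintro ⟨h, h0⟩
    exact ⟨⟨x, h⟩, rfl, h0⟩
  · rintro ⟨⟨y, h⟩, rfl, h0⟩
    exact ⟨h, h0⟩

lemma isClosed_kerSub {T : E →ₗ.[𝕜] F} (hT : T.IsClosed) : IsClosed (T.kerSub : Set E) := by
  have : (T.kerSub : Set E) = (fun x : E => (x, (0 : F))) ⁻¹' (T.graph : Set (E × F)) := by
    ext x
    exact mem_kerSub_iff_graph
  rw [this]
  exact IsClosed.preimage (by fun_prop) hT

/-- Each element of `D(T)` differs from one in `D(T) ∩ N(T)ᗮ` by an element of the kernel. -/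
lemma exists_orthogonal [CompleteSpace E] {T : E →ₗ.[𝕜] F} (hT : T.IsClosed) (x : T.domain) :
    ∃ x' : T.domain, (x' : E) ∈ T.kerSubᗮ ∧ T x' = T x ∧ (x : E) - x' ∈ T.kerSub := by
  have : CompleteSpace T.kerSub := (isClosed_kerSub hT).completeSpace_coe
  obtain ⟨k, hk, z, hz, hxe⟩ := T.kerSub.exists_add_mem_mem_orthogonal (x : E)
  obtain ⟨hkd, hk0⟩ := mem_kerSub.1 hk
  refine ⟨x - ⟨k, hkd⟩, ?_, ?_, ?_⟩
  · simpa [hxe] using hz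
  · rw [LinearPMap.map_sub, hk0, sub_zero]
  · simpa using hk

/-- If bounded sequences (in the graph norm) in `D(T) ∩ N(T)ᗮ` subconverge, then `T` is bounded
below on that set. -/
lemma exists_estimate {T : E →ₗ.[𝕜] F} (hT : T.IsClosed)
    (hcpt : ∀ x : ℕ → T.domain, (∀ n, (x n : E) ∈ T.kerSubᗮ) →
      (∃ C : ℝ, ∀ n, ‖(x n : E)‖ + ‖T (x n)‖ ≤ C) →
      ∃ φ : ℕ → ℕ, StrictMono φ ∧ ∃ l : E, Tendsto (fun n => (x (φ n) : E)) atTop (𝓝 l)) :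
    ∃ c : ℝ, ∀ x : T.domain, (x : E) ∈ T.kerSubᗮ → ‖(x : E)‖ ≤ c * ‖T x‖ := by
  by_contra! hcon
  choose u hu hlt using fun n : ℕ => hcon ((n : ℝ) + 1)
  have hpos : ∀ n, 0 < ‖(u n : E)‖ := fun n =>
    lt_of_le_of_lt (by positivity) (hlt n)
  -- normalise the sequence violating the estimate
  let v : ℕ → T.domain := fun n => ((‖(u n : E)‖⁻¹ : ℝ) : 𝕜) • u n
  have hvnorm : ∀ n, ‖(v n : E)‖ = 1 := fun n => by
    have := (hpos n).ne'
    simp [v, norm_smul, this]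
  have hvK : ∀ n, (v n : E) ∈ T.kerSubᗮ := fun n => Submodule.smul_mem _ _ (hu n)
  have hTv : ∀ n, ‖T (v n)‖ ≤ 1 / ((n : ℝ) + 1) := fun n => by
    have h1 : ‖T (v n)‖ = ‖(u n : E)‖⁻¹ * ‖T (u n)‖ := by
      simp [v, LinearPMap.map_smul, norm_smul]
    rw [h1, inv_mul_eq_div, div_le_div_iff₀ (hpos n) (by positivity)]
    linarith [hlt n]
  obtain ⟨φ, hφ, l, hl⟩ := hcpt v hvK ⟨2, fun n => by
    have : 1 / ((n : ℝ) + 1) ≤ 1 := by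
      rw [div_le_one (by positivity)]
      have : (0 : ℝ) ≤ n := by positivity
      linarith
    linarith [hTv n, hvnorm n]⟩
  have hT0 : Tendsto (fun n => T (v n)) atTop (𝓝 0) :=
    squeeze_zero_norm hTv tendsto_one_div_add_atTop_nhds_zero_nat
  have hker : l ∈ T.kerSub := mem_kerSub_iff_graph.2 <|
    IsClosed.mem_of_tendsto (f := fun n => ((v (φ n) : E), T (v (φ n)))) hT
      (hl.prodMk_nhds (hT0.comp hφ.tendsto_atTop))
      (Eventually.of_forall fun n => T.mem_graph _)
  have horth : l ∈ T.kerSubᗮ :=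
    (Submodule.isClosed_orthogonal _).mem_of_tendsto hl (Eventually.of_forall fun n => hvK _)
  have hl1 : ‖l‖ = 1 := tendsto_nhds_unique hl.norm (by simp [hvnorm])
  have hl0 : l = 0 := inner_self_eq_zero.1 (Submodule.inner_right_of_mem_orthogonal hker horth)
  simp [hl0] at hl1

lemma isClosed_range [CompleteSpace E] [CompleteSpace F] {T : E →ₗ.[𝕜] F} (hT : T.IsClosed)
    {c : ℝ} (hest : ∀ x : T.domain, (x : E) ∈ T.kerSubᗮ → ‖(x : E)‖ ≤ c * ‖T x‖) :
    IsClosed (LinearMap.range T.toFun : Set F) := by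
  -- `W` is the graph of the restriction of `T` to `N(T)ᗮ`; it is complete, and `snd` is bounded below on it
  let W : Submodule 𝕜 (E × F) := T.graph ⊓ T.kerSubᗮ.comap (LinearMap.fst 𝕜 E F)
  have hW : IsClosed (W : Set (E × F)) :=
    IsClosed.inter hT ((Submodule.isClosed_orthogonal _).preimage continuous_fst)
  have : CompleteSpace W := hW.completeSpace_coe
  let f : W →L[𝕜] F := (ContinuousLinearMap.snd 𝕜 E F).comp W.subtypeL
  have hf : AntilipschitzWith (max c 1).toNNReal f := by
    refine f.antilipschitz_of_bound fun w => ?_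
    obtain ⟨⟨a, b⟩, hg, ho⟩ := w
    obtain ⟨x, rfl, rfl⟩ := (LinearPMap.mem_graph_iff T).1 hg
    have h1 := hest x ho
    rw [Real.coe_toNNReal _ (le_max_of_le_right zero_le_one)]
    change max ‖(x : E)‖ ‖T x‖ ≤ max c 1 * ‖T x‖
    refine max_le (h1.trans ?_) ?_
    · gcongr
      exact le_max_left _ _
    · exact le_mul_of_one_le_left (norm_nonneg _) (le_max_right _ _)
  have hr : (LinearMap.range T.toFun : Set F) = Set.range f := by
    ext y
    constructor
    · rintro ⟨x, rfl⟩
      obtain ⟨x', ho, he, -⟩ := exists_orthogonal hT x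
      exact ⟨⟨((x' : E), T x'), T.mem_graph _, ho⟩, he⟩
    · rintro ⟨⟨⟨a, b⟩, hg, -⟩, rfl⟩
      obtain ⟨x, -, hx⟩ := (LinearPMap.mem_graph_iff T).1 hg
      exact ⟨x, hx⟩
  rw [hr]
  exact hf.isClosed_range f.uniformContinuous

/-- A functional dominated by `‖L ·‖` factors through `L` as an inner product. -/
lemma exists_riesz [CompleteSpace F] {V : Type*} [AddCommGroup V] [Module 𝕜 V]
    (L : V →ₗ[𝕜] F) (f : V →ₗ[𝕜] 𝕜) (C : ℝ) (h : ∀ x, ‖f x‖ ≤ C * ‖L x‖) :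
    ∃ z : F, ∀ x, ⟪z, L x⟫_𝕜 = f x := by
  obtain ⟨s, hs⟩ := L.rangeRestrict.exists_rightInverse_of_surjective L.range_rangeRestrict
  have hLs : ∀ r, L (s r) = r := fun r => congrArg Subtype.val (LinearMap.congr_fun hs r)
  let φ : StrongDual 𝕜 (LinearMap.range L) := (f ∘ₗ s).mkContinuous C fun r => by
    simpa [hLs] using h (s r)
  obtain ⟨g, hg, -⟩ := exists_extension_norm_eq (LinearMap.range L) φ
  refine ⟨(InnerProductSpace.toDual 𝕜 F).symm g, fun x => ?_⟩
  rw [InnerProductSpace.toDual_symm_apply]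
  have h1 : g (L x) = f (s ⟨L x, x, rfl⟩) := hg ⟨L x, x, rfl⟩
  -- the two preimages of `L x` agree under `f`, since `f` vanishes on the kernel of `L`
  have h2 := h (s ⟨L x, x, rfl⟩ - x)
  rw [map_sub L, hLs, sub_self, norm_zero, mul_zero, norm_le_zero_iff, map_sub, sub_eq_zero] at h2
  rw [h1, h2]

lemma exists_preimage [CompleteSpace E] [CompleteSpace F] {T : E →ₗ.[𝕜] F} (hT : T.IsClosed)
    {c : ℝ} (hest : ∀ x : T.domain, (x : E) ∈ T.kerSubᗮ → ‖(x : E)‖ ≤ c * ‖T x‖)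
    {y : E} (hy : y ∈ T.kerSubᗮ) : ∃ z : F, ∀ x : T.domain, ⟪z, T x⟫_𝕜 = ⟪y, (x : E)⟫_𝕜 := by
  refine exists_riesz T.toFun ((innerₛₗ 𝕜 y).comp T.domain.subtype) (‖y‖ * c) fun x => ?_
  obtain ⟨x', ho, he, hk⟩ := exists_orthogonal hT x
  have h0 : ⟪y, (x : E)⟫_𝕜 = ⟪y, (x' : E)⟫_𝕜 := by
    rw [← sub_eq_zero, ← inner_sub_right]
    exact Submodule.inner_left_of_mem_orthogonal hk hy
  change ‖⟪y, (x : E)⟫_𝕜‖ ≤ ‖y‖ * c * ‖T x‖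
  rw [h0, ← he, mul_assoc]
  exact (norm_inner_le_norm _ _).trans (by gcongr; exact hest x' ho)

/-- `T** ⊆ T` for a closed densely defined `T`, in terms of graphs. -/
lemma mem_graph_of_adjoint [CompleteSpace E] [CompleteSpace F] {T : E →ₗ.[𝕜] F}
    (hd : Dense (T.domain : Set E)) (hT : T.IsClosed) {z : E} {y : F}
    (h : ∀ x : T.adjoint.domain, ⟪z, T.adjoint x⟫_𝕜 = ⟪y, (x : F)⟫_𝕜) : (z, y) ∈ T.graph := by
  -- the graph as a subspace of the Hilbert space `E ⊕ F`
  let G : Submodule 𝕜 (WithLp 2 (E × F)) :=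
    T.graph.comap (WithLp.linearEquiv 2 𝕜 (E × F)).toLinearMap
  have hG : IsClosed (G : Set (WithLp 2 (E × F))) :=
    IsClosed.preimage (WithLp.prod_continuous_ofLp 2 E F) hT
  have : CompleteSpace G := hG.completeSpace_coe
  have key : WithLp.toLp 2 (z, y) ∈ Gᗮᗮ := by
    rw [Submodule.mem_orthogonal]
    intro w hw
    have hw' : ∀ x : T.domain, ⟪-w.fst, (x : E)⟫_𝕜 = ⟪w.snd, T x⟫_𝕜 := fun x => by
      have := (Submodule.mem_orthogonal' _ _).1 hw (WithLp.toLp 2 ((x : E), T x)) (T.mem_graph x)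
      rw [WithLp.prod_inner_apply] at this
      rw [inner_neg_left]
      exact neg_eq_of_add_eq_zero_right this
    have hmem := T.mem_adjoint_domain_of_exists w.snd ⟨-w.fst, hw'⟩
    have h1 := h ⟨w.snd, hmem⟩
    rw [LinearPMap.adjoint_apply_eq hd ⟨w.snd, hmem⟩ hw', inner_neg_right] at h1
    have h2 : ⟪z, w.fst⟫_𝕜 + ⟪y, w.snd⟫_𝕜 = 0 := by rw [← h1]; ring
    have h3 := congrArg (starRingEnd 𝕜) h2
    rw [map_add, inner_conj_symm, inner_conj_symm, map_zero] at h3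
    rw [WithLp.prod_inner_apply]
    exact h3
  rw [Submodule.orthogonal_orthogonal] at key
  exact key

lemma mem_ker_adjoint_iff [CompleteSpace E] {T : E →ₗ.[𝕜] F} (hd : Dense (T.domain : Set E))
    {y : F} : y ∈ T.adjoint.kerSub ↔ y ∈ (LinearMap.range T.toFun)ᗮ := by
  rw [mem_kerSub, Submodule.mem_orthogonal']
  constructor
  · rintro ⟨h, h0⟩ _ ⟨x, rfl⟩
    have := LinearPMap.adjoint_isFormalAdjoint hd ⟨y, h⟩ x
    rw [h0, inner_zero_left] at this
    exact this.symm
  · intro h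
    have h' : ∀ x : T.domain, ⟪(0 : E), (x : E)⟫_𝕜 = ⟪y, T x⟫_𝕜 := fun x => by
      rw [inner_zero_left]
      exact (h _ ⟨x, rfl⟩).symm
    exact ⟨T.mem_adjoint_domain_of_exists y ⟨0, h'⟩, LinearPMap.adjoint_apply_eq hd _ h'⟩

end FAT

/-- For a Hilbert complex `A₀, A₁`, if the embedding
`D(A₁) ∩ D(A₀*) ↪ H₁` is compact, then the ranges `R(A₀)`, `R(A₀*)`, `R(A₁)`, `R(A₁*)` are
all closed and the cohomology group `N₀₁ = N(A₁) ∩ N(A₀*)` is finite-dimensional. -/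
theorem mini_FAT_closed_ranges_and_finite_cohomology
    {𝕜 H₀ H₁ H₂ : Type*} [RCLike 𝕜]
    [NormedAddCommGroup H₀] [InnerProductSpace 𝕜 H₀] [CompleteSpace H₀]
    [NormedAddCommGroup H₁] [InnerProductSpace 𝕜 H₁] [CompleteSpace H₁]
    [NormedAddCommGroup H₂] [InnerProductSpace 𝕜 H₂] [CompleteSpace H₂]
    (A₀ : H₀ →ₗ.[𝕜] H₁) (A₁ : H₁ →ₗ.[𝕜] H₂)
    (h₀dense : Dense (A₀.domain : Set H₀)) (h₀closed : A₀.IsClosed)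
    (h₁dense : Dense (A₁.domain : Set H₁)) (h₁closed : A₁.IsClosed)
    (hcomplex : LinearMap.range A₀.toFun ≤ A₁.kerSub)
    (hcpt : ∀ x : ℕ → H₁, ∀ (h₁ : ∀ n, x n ∈ A₁.domain) (h₂ : ∀ n, x n ∈ A₀.adjoint.domain),
      (∃ C : ℝ, ∀ n,
        ‖x n‖ + ‖A₁ ⟨x n, h₁ n⟩‖ + ‖A₀.adjoint ⟨x n, h₂ n⟩‖ ≤ C) →
      ∃ φ : ℕ → ℕ, StrictMono φ ∧
        ∃ l : H₁, Tendsto (fun n => x (φ n)) atTop (𝓝 l)) :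
    IsClosed (LinearMap.range A₀.toFun : Set H₁) ∧
    IsClosed (LinearMap.range A₀.adjoint.toFun : Set H₀) ∧
    IsClosed (LinearMap.range A₁.toFun : Set H₂) ∧
    IsClosed (LinearMap.range A₁.adjoint.toFun : Set H₁) ∧
    FiniteDimensional 𝕜 (A₁.kerSub ⊓ A₀.adjoint.kerSub : Submodule 𝕜 H₁) := by
  have h₀'closed : A₀.adjoint.IsClosed := LinearPMap.adjoint_isClosed h₀dense
  have hker₀ : A₀.adjoint.kerSub = (LinearMap.range A₀.toFun)ᗮ :=
    Submodule.ext fun _ => FAT.mem_ker_adjoint_iff h₀dense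
  have hN₁ := FAT.isClosed_kerSub h₁closed
  have : CompleteSpace A₁.kerSub := hN₁.completeSpace_coe
  have hincl₁ : A₁.kerSubᗮ ≤ A₀.adjoint.kerSub := by
    rw [hker₀]
    exact Submodule.orthogonal_le hcomplex
  have hincl₀ : A₀.adjoint.kerSubᗮ ≤ A₁.kerSub := by
    rw [← A₁.kerSub.orthogonal_orthogonal]
    exact Submodule.orthogonal_le hincl₁
  obtain ⟨c₁, hest₁⟩ := FAT.exists_estimate h₁closed fun x hx ⟨C, hC⟩ => by
    choose hd h0 using fun n => FAT.mem_kerSub.1 (hincl₁ (hx n))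
    exact hcpt (fun n => x n) (fun n => (x n).2) hd ⟨C, fun n => by
      rw [h0, norm_zero, add_zero]
      exact hC n⟩
  obtain ⟨c₀, hest₀⟩ := FAT.exists_estimate h₀'closed fun x hx ⟨C, hC⟩ => by
    choose hd h0 using fun n => FAT.mem_kerSub.1 (hincl₀ (hx n))
    exact hcpt (fun n => x n) hd (fun n => (x n).2) ⟨C, fun n => by
      rw [h0, norm_zero, add_zero]
      exact hC n⟩
  refine ⟨?_, FAT.isClosed_range h₀'closed hest₀, FAT.isClosed_range h₁closed hest₁,
    ?_, ?_⟩
  · -- `R(A₀) = N(A₀*)ᗮ`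
    have : LinearMap.range A₀.toFun = A₀.adjoint.kerSubᗮ := by
      refine le_antisymm ?_ fun y hy => ?_
      · rw [hker₀]
        exact Submodule.le_orthogonal_orthogonal _
      · obtain ⟨z, hz⟩ := FAT.exists_preimage h₀'closed hest₀ hy
        obtain ⟨x, -, hx⟩ := (LinearPMap.mem_graph_iff A₀).1
          (FAT.mem_graph_of_adjoint h₀dense h₀closed hz)
        exact ⟨x, hx⟩
    rw [this]
    exact Submodule.isClosed_orthogonal _
  · -- `R(A₁*) = N(A₁)ᗮ`
    have : LinearMap.range A₁.adjoint.toFun = A₁.kerSubᗮ := by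
      refine le_antisymm ?_ fun y hy => ?_
      · rintro _ ⟨z, rfl⟩
        rw [Submodule.mem_orthogonal']
        intro x hx
        obtain ⟨hd, h0⟩ := FAT.mem_kerSub.1 hx
        have := LinearPMap.adjoint_isFormalAdjoint h₁dense z ⟨x, hd⟩
        rw [h0, inner_zero_right] at this
        exact this
      · obtain ⟨z, hz⟩ := FAT.exists_preimage h₁closed hest₁ hy
        have hz' := fun x => (hz x).symm
        exact ⟨⟨z, A₁.mem_adjoint_domain_of_exists z ⟨y, hz'⟩⟩,
          LinearPMap.adjoint_apply_eq h₁dense _ hz'⟩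
    rw [this]
    exact Submodule.isClosed_orthogonal _
  · have hclosed : IsClosed ((A₁.kerSub ⊓ A₀.adjoint.kerSub : Submodule 𝕜 H₁) : Set H₁) :=
      IsClosed.inter hN₁ (FAT.isClosed_kerSub h₀'closed)
    refine FiniteDimensional.of_isCompact_closedBall₀ 𝕜 zero_lt_one (IsSeqCompact.isCompact ?_)
    intro x hx
    choose hd₁ h1 using fun n => FAT.mem_kerSub.1 (x n).2.1
    choose hd₀ h0 using fun n => FAT.mem_kerSub.1 (x n).2.2
    have hx1 : ∀ n, ‖(x n : H₁)‖ ≤ 1 := fun n => mem_closedBall_zero_iff.1 (hx n)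
    obtain ⟨φ, hφ, l, hl⟩ := hcpt (fun n => x n) hd₁ hd₀ ⟨1, fun n => by
      rw [h0, h1, norm_zero, norm_zero, add_zero, add_zero]
      exact hx1 n⟩
    have hlm := hclosed.mem_of_tendsto hl (Eventually.of_forall fun n => (x (φ n)).2)
    refine ⟨⟨l, hlm⟩, mem_closedBall_zero_iff.2 ?_, φ, hφ, tendsto_subtype_rng.2 hl⟩
    exact le_of_tendsto hl.norm (Eventually.of_forall fun n => hx1 (φ n))
end
end

section
/- Let A₀ : D(A₀) ⊂ H₀ → H₁ and A₁ : D(A₁) ⊂ H₁ → H₂ be densely defined closed linear operators between Hilbert spaces satisfying R(A₀) ⊂ N(A₁), and suppose the embedding D(A₁) ∩ D(A₀*) ↪ H₁ is compact. Then the orthogonal Helmholtz-type decomposition H₁ = R(A₀) ⊕ N_{0,1} ⊕ R(A₁*) holds, where the ranges R(A₀) and R(A₁*) themselves (not merely their closures) are closed subspaces, the three subspaces are pairwise orthogonal, and their sum is H₁. -/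
/-!
The decomposition rests on a Poincaré inequality extracted from compactness. If `T` is closed and
bounded sequences (in the graph norm) of `D(T) ∩ N(T)ᗮ` have convergent subsequences, then
`‖x‖ ≤ c ‖T x‖` on `D(T) ∩ N(T)ᗮ`: otherwise a normalised sequence with `T xₙ → 0` would
converge to a unit vector of `N(T) ∩ N(T)ᗮ` (`exists_poincare`). The inequality makes
`T x ↦ ⟪y, x⟫` a bounded functional on `R(T)` for every `y ∈ N(T)ᗮ`, so the Hahn-Banach and
Riesz theorems give `z` with `⟪z, T x⟫ = ⟪y, x⟫` on `D(T)` (`exists_inner_eq`).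

For `T = A₁` this says `N(A₁)ᗮ ⊆ R(A₁*)`. For `T = A₀*`, together with `A₀** = A₀`
(`mem_graph_of_inner_adjoint`), it says `N(A₀*)ᗮ ⊆ R(A₀)`. The compactness hypothesis applies in
both cases because `N(A₁)ᗮ ⊆ R(A₀)ᗮ = N(A₀*)` and `N(A₀*)ᗮ = closure R(A₀) ⊆ N(A₁)`, so
that one of the two operators vanishes on the sequence. Hence `R(A₁*) = N(A₁)ᗮ` and
`R(A₀) = N(A₀*)ᗮ` are closed. Projecting onto `N(A₁)` and then, inside `N(A₁)`, onto `R(A₀)`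
yields the three components.
-/

open Filter Topology

noncomputable section

open scoped InnerProductSpace

namespace HelmholtzAux

section

variable {𝕜 E F : Type*} [RCLike 𝕜]
  [NormedAddCommGroup E] [InnerProductSpace 𝕜 E]
  [NormedAddCommGroup F] [InnerProductSpace 𝕜 F]

theorem mem_kerSub_iff_graph {T : E →ₗ.[𝕜] F} {x : E} :
    x ∈ T.kerSub ↔ (x, (0 : F)) ∈ T.graph := by
  rw [LinearPMap.mem_graph_iff]
  constructor
  · rintro ⟨y, hy, rfl⟩
    exact ⟨y, rfl, hy⟩
  · rintro ⟨y, hy, hy'⟩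
    exact ⟨y, hy', hy⟩

theorem mem_kerSub_iff {T : E →ₗ.[𝕜] F} {x : E} :
    x ∈ T.kerSub ↔ ∃ h : x ∈ T.domain, T ⟨x, h⟩ = 0 := by
  constructor
  · rintro ⟨y, hy, rfl⟩
    exact ⟨y.2, hy⟩
  · rintro ⟨h, h'⟩
    exact ⟨⟨x, h⟩, h', rfl⟩

theorem isClosed_kerSub {T : E →ₗ.[𝕜] F} (hT : T.IsClosed) : IsClosed (T.kerSub : Set E) := by
  have h : (T.kerSub : Set E) = (fun x : E => (x, (0 : F))) ⁻¹' (T.graph : Set (E × F)) := by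
    ext x
    exact mem_kerSub_iff_graph
  rw [h]
  exact IsClosed.preimage (by fun_prop) hT

/-- `N(T*) = R(T)ᗮ`. -/
theorem mem_kerSub_adjoint_iff [CompleteSpace E] {T : E →ₗ.[𝕜] F}
    (hT : Dense (T.domain : Set E)) {v : F} :
    v ∈ T.adjoint.kerSub ↔ ∀ x : T.domain, ⟪v, T x⟫_𝕜 = 0 := by
  rw [mem_kerSub_iff]
  constructor
  · rintro ⟨h, h0⟩ x
    have := LinearPMap.adjoint_isFormalAdjoint hT ⟨v, h⟩ x
    rw [h0, inner_zero_left] at this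
    exact this.symm
  · intro h
    have hv : v ∈ T.adjoint.domain :=
      LinearPMap.mem_adjoint_domain_of_exists v ⟨0, fun x => by rw [h x, inner_zero_left]⟩
    exact ⟨hv, LinearPMap.adjoint_apply_eq hT ⟨v, hv⟩ fun x => by
      rw [inner_zero_left]; exact (h x).symm⟩

/-- The inclusion `T** ≤ T` for a closed operator `T`, obtained from `graph(T)ᗮᗮ = graph(T)` in
the Hilbert sum `E ⊕ F`. -/
theorem mem_graph_of_inner_adjoint [CompleteSpace E] [CompleteSpace F] {T : E →ₗ.[𝕜] F}
    (hT : Dense (T.domain : Set E)) (hc : T.IsClosed) {z : E} {y : F}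
    (h : ∀ x : T.adjoint.domain, ⟪z, T.adjoint x⟫_𝕜 = ⟪y, (x : F)⟫_𝕜) : (z, y) ∈ T.graph := by
  let e := WithLp.prodContinuousLinearEquiv 2 𝕜 E F
  let G : Submodule 𝕜 (WithLp 2 (E × F)) := T.graph.comap (e : WithLp 2 (E × F) →ₗ[𝕜] E × F)
  have hG : IsClosed (G : Set (WithLp 2 (E × F))) := IsClosed.preimage e.continuous hc
  have : CompleteSpace G := hG.completeSpace_coe
  have key : WithLp.toLp 2 (z, y) ∈ Gᗮᗮ := by
    rw [Submodule.mem_orthogonal]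
    intro w hw
    rw [Submodule.mem_orthogonal'] at hw
    have hw' : ∀ x : T.domain, ⟪-w.fst, (x : E)⟫_𝕜 = ⟪w.snd, T x⟫_𝕜 := by
      intro x
      have := hw (WithLp.toLp 2 ((x : E), T x)) (T.mem_graph x)
      rw [WithLp.prod_inner_apply] at this
      rw [inner_neg_left]
      exact neg_eq_of_add_eq_zero_right this
    have hd : w.snd ∈ T.adjoint.domain :=
      LinearPMap.mem_adjoint_domain_of_exists _ ⟨_, hw'⟩
    have ha : T.adjoint ⟨w.snd, hd⟩ = -w.fst := LinearPMap.adjoint_apply_eq hT ⟨_, hd⟩ hw'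
    have h2 := h ⟨w.snd, hd⟩
    rw [ha, inner_neg_right] at h2
    rw [inner_eq_zero_symm, WithLp.prod_inner_apply]
    change ⟪z, w.fst⟫_𝕜 + ⟪y, w.snd⟫_𝕜 = 0
    rw [← h2, add_neg_cancel]
  rw [Submodule.orthogonal_orthogonal] at key
  exact key

/-- Poincaré inequality on `D(T) ∩ N(T)ᗮ`, with compactness required only of sequences of unit
vectors of that space. -/
theorem exists_poincare {T : E →ₗ.[𝕜] F} (hT : T.IsClosed)
    (hcpt : ∀ x : ℕ → E, ∀ h : ∀ n, x n ∈ T.domain, (∀ n, x n ∈ T.kerSubᗮ) →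
      (∀ n, ‖x n‖ = 1) → (∀ n, ‖T ⟨x n, h n⟩‖ ≤ 1) →
      ∃ φ : ℕ → ℕ, StrictMono φ ∧ ∃ l : E, Tendsto (fun n => x (φ n)) atTop (𝓝 l)) :
    ∃ c : ℝ, ∀ x : T.domain, (x : E) ∈ T.kerSubᗮ → ‖(x : E)‖ ≤ c * ‖T x‖ := by
  by_contra! hcon
  choose x hx hlt using fun n : ℕ => hcon (n + 1)
  have hpos : ∀ n, 0 < ‖(x n : E)‖ := fun n =>
    lt_of_le_of_lt (by positivity) (hlt n)
  let u : ℕ → T.domain := fun n => ((‖(x n : E)‖⁻¹ : ℝ) : 𝕜) • x n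
  have hu1 : ∀ n, ‖(u n : E)‖ = 1 := fun n => by
    simp [u, norm_smul, (hpos n).ne']
  have hTu : ∀ n, ‖T (u n)‖ ≤ 1 / ((n : ℝ) + 1) := fun n => by
    have h1 : ‖T (u n)‖ = ‖(x n : E)‖⁻¹ * ‖T (x n)‖ := by
      simp [u, norm_smul, LinearPMap.map_smul]
    rw [h1, inv_mul_eq_div, div_le_div_iff₀ (hpos n) (by positivity)]
    linarith [hlt n]
  have hu2 : ∀ n, (u n : E) ∈ T.kerSubᗮ := fun n => Submodule.smul_mem _ _ (hx n)
  obtain ⟨φ, hφ, l, hl⟩ := hcpt (fun n => u n) (fun n => (u n).2) hu2 hu1 fun n =>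
    (hTu n).trans (by
      rw [div_le_one (by positivity)]
      linarith [(Nat.cast_nonneg n : (0 : ℝ) ≤ n)])
  have hT0 : Tendsto (fun n => T (u (φ n))) atTop (𝓝 0) :=
    (squeeze_zero_norm hTu tendsto_one_div_add_atTop_nhds_zero_nat).comp hφ.tendsto_atTop
  have hker : l ∈ T.kerSub := mem_kerSub_iff_graph.2 <|
    IsClosed.mem_of_tendsto hT (hl.prodMk_nhds hT0) (Eventually.of_forall fun n => T.mem_graph _)
  have hperp : l ∈ T.kerSubᗮ :=
    (Submodule.isClosed_orthogonal _).mem_of_tendsto hl (Eventually.of_forall fun n => hu2 _)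
  have hl0 : l = 0 := inner_self_eq_zero.1 ((Submodule.mem_orthogonal _ _).1 hperp l hker)
  have hl1 : ‖l‖ = 1 :=
    tendsto_nhds_unique hl.norm (by simp only [hu1]; exact tendsto_const_nhds)
  simp [hl0] at hl1

/-- If `T` satisfies the Poincaré inequality, every `y ∈ N(T)ᗮ` is of the form `T* z`. It is stated
through inner products, so that density of `D(T)` is not needed. -/
theorem exists_inner_eq [CompleteSpace E] [CompleteSpace F] {T : E →ₗ.[𝕜] F} (hT : T.IsClosed)
    {c : ℝ} (hp : ∀ x : T.domain, (x : E) ∈ T.kerSubᗮ → ‖(x : E)‖ ≤ c * ‖T x‖)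
    {y : E} (hy : y ∈ T.kerSubᗮ) :
    ∃ z : F, ∀ x : T.domain, ⟪z, T x⟫_𝕜 = ⟪y, (x : E)⟫_𝕜 := by
  have : CompleteSpace T.kerSub := (isClosed_kerSub hT).completeSpace_coe
  have hb : ∀ x : T.domain, ‖⟪y, (x : E)⟫_𝕜‖ ≤ ‖y‖ * c * ‖T x‖ := by
    intro x
    -- Subtracting the projection onto `N(T)` changes neither `⟪y, x⟫` nor `T x`.
    obtain ⟨k, hk, w, hw, hkw⟩ := T.kerSub.exists_add_mem_mem_orthogonal (x : E)
    obtain ⟨hkd, hk0⟩ := mem_kerSub_iff.1 hk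
    have hwx : w = ((x - ⟨k, hkd⟩ : T.domain) : E) := by
      simp [hkw]
    have hTw : T (x - ⟨k, hkd⟩) = T x := by rw [LinearPMap.map_sub, hk0, sub_zero]
    have h1 := hp (x - ⟨k, hkd⟩) (hwx ▸ hw)
    rw [← hwx, hTw] at h1
    rw [hkw, inner_add_right, (Submodule.mem_orthogonal' _ _).1 hy k hk, zero_add, mul_assoc]
    exact (norm_inner_le_norm _ _).trans (by gcongr)
  -- By `hb`, `⟪y, x⟫` depends only on `T x`, so any linear section `s` of `T` over its range
  -- induces the functional `T x ↦ ⟪y, x⟫`.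
  obtain ⟨s, hs⟩ := T.toFun.rangeRestrict.exists_rightInverse_of_surjective
    T.toFun.range_rangeRestrict
  have hs' : ∀ r : LinearMap.range T.toFun, T (s r) = r := fun r =>
    congrArg Subtype.val (LinearMap.congr_fun hs r)
  let g : StrongDual 𝕜 (LinearMap.range T.toFun) :=
    LinearMap.mkContinuous ((innerₛₗ 𝕜 y).comp (T.domain.subtype.comp s)) (‖y‖ * c) fun r => by
      have := hb (s r)
      rw [hs' r] at this
      exact this
  obtain ⟨G, hG, -⟩ := exists_extension_norm_eq _ g
  refine ⟨(InnerProductSpace.toDual 𝕜 F).symm G, fun x => ?_⟩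
  rw [InnerProductSpace.toDual_symm_apply]
  let r : LinearMap.range T.toFun := ⟨T x, x, rfl⟩
  have h1 : G (T x) = ⟪y, (s r : E)⟫_𝕜 := hG r
  have h2 := hb (s r - x)
  rw [LinearPMap.map_sub, hs' r, sub_self, norm_zero, mul_zero, norm_le_zero_iff,
    Submodule.coe_sub, inner_sub_right, sub_eq_zero] at h2
  rw [h1, h2]

end

end HelmholtzAux

/-- For a Hilbert complex `A₀, A₁` such that the embedding
`D(A₁) ∩ D(A₀*) ↪ H₁` is compact, the orthogonal Helmholtz-type decomposition
`H₁ = R(A₀) ⊕ N₀₁ ⊕ R(A₁*)` holds: the ranges `R(A₀)` and `R(A₁*)` themselves are closed,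
the three subspaces are pairwise orthogonal, and their sum is `H₁`. -/
theorem helmholtz_decomposition_compact
    {𝕜 H₀ H₁ H₂ : Type*} [RCLike 𝕜]
    [NormedAddCommGroup H₀] [InnerProductSpace 𝕜 H₀] [CompleteSpace H₀]
    [NormedAddCommGroup H₁] [InnerProductSpace 𝕜 H₁] [CompleteSpace H₁]
    [NormedAddCommGroup H₂] [InnerProductSpace 𝕜 H₂] [CompleteSpace H₂]
    (A₀ : H₀ →ₗ.[𝕜] H₁) (A₁ : H₁ →ₗ.[𝕜] H₂)
    (h₀dense : Dense (A₀.domain : Set H₀)) (h₀closed : A₀.IsClosed)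
    (h₁dense : Dense (A₁.domain : Set H₁)) (h₁closed : A₁.IsClosed)
    (hcomplex : LinearMap.range A₀.toFun ≤ A₁.kerSub)
    (hcpt : ∀ x : ℕ → H₁, ∀ (h₁ : ∀ n, x n ∈ A₁.domain) (h₂ : ∀ n, x n ∈ A₀.adjoint.domain),
      (∃ C : ℝ, ∀ n,
        ‖x n‖ + ‖A₁ ⟨x n, h₁ n⟩‖ + ‖A₀.adjoint ⟨x n, h₂ n⟩‖ ≤ C) →
      ∃ φ : ℕ → ℕ, StrictMono φ ∧
        ∃ l : H₁, Tendsto (fun n => x (φ n)) atTop (𝓝 l)) :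
    IsClosed (LinearMap.range A₀.toFun : Set H₁) ∧
    IsClosed (LinearMap.range A₁.adjoint.toFun : Set H₁) ∧
    (∀ u ∈ LinearMap.range A₀.toFun,
      ∀ v ∈ A₁.kerSub ⊓ A₀.adjoint.kerSub, @inner 𝕜 _ _ u v = 0) ∧
    (∀ u ∈ LinearMap.range A₀.toFun,
      ∀ w ∈ LinearMap.range A₁.adjoint.toFun, @inner 𝕜 _ _ u w = 0) ∧
    (∀ v ∈ A₁.kerSub ⊓ A₀.adjoint.kerSub,
      ∀ w ∈ LinearMap.range A₁.adjoint.toFun, @inner 𝕜 _ _ v w = 0) ∧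
    LinearMap.range A₀.toFun ⊔ (A₁.kerSub ⊓ A₀.adjoint.kerSub) ⊔
      LinearMap.range A₁.adjoint.toFun = ⊤ := by
  have hran : ∀ x : A₀.domain, A₀ x ∈ A₁.kerSub := fun x => hcomplex ⟨x, rfl⟩
  have hc1 : IsClosed (A₁.kerSub : Set H₁) := HelmholtzAux.isClosed_kerSub h₁closed
  have hcA : A₀.adjoint.IsClosed := LinearPMap.adjoint_isClosed h₀dense
  have hK1 : CompleteSpace A₁.kerSub := hc1.completeSpace_coe
  -- `N(A₁)ᗮ ⊆ R(A₀)ᗮ = N(A₀*)`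
  have hperp1 : A₁.kerSubᗮ ≤ A₀.adjoint.kerSub := fun v hv =>
    (HelmholtzAux.mem_kerSub_adjoint_iff h₀dense).2 fun x =>
      (Submodule.mem_orthogonal' _ _).1 hv _ (hran x)
  -- `N(A₀*)ᗮ ⊆ N(A₁)ᗮᗮ = N(A₁)`
  have hperp0 : A₀.adjoint.kerSubᗮ ≤ A₁.kerSub := by
    have := Submodule.orthogonal_le hperp1
    rwa [Submodule.orthogonal_orthogonal] at this
  obtain ⟨c₁, hp₁⟩ := HelmholtzAux.exists_poincare h₁closed fun x hd hx hn hT => by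
    have hk := fun n => HelmholtzAux.mem_kerSub_iff.1 (hperp1 (hx n))
    refine hcpt x hd (fun n => (hk n).1) ⟨2, fun n => ?_⟩
    rw [(hk n).2, norm_zero, hn n]
    linarith [hT n]
  obtain ⟨c₀, hp₀⟩ := HelmholtzAux.exists_poincare hcA fun x hd hx hn hT => by
    have hk := fun n => HelmholtzAux.mem_kerSub_iff.1 (hperp0 (hx n))
    refine hcpt x (fun n => (hk n).1) hd ⟨2, fun n => ?_⟩
    rw [(hk n).2, norm_zero, hn n]
    linarith [hT n]
  have hR1 : LinearMap.range A₁.adjoint.toFun = A₁.kerSubᗮ := by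
    apply le_antisymm
    · rintro _ ⟨z, rfl⟩
      rw [Submodule.mem_orthogonal']
      intro k hk
      obtain ⟨hkd, hk0⟩ := HelmholtzAux.mem_kerSub_iff.1 hk
      have := LinearPMap.adjoint_isFormalAdjoint h₁dense z ⟨k, hkd⟩
      rw [hk0, inner_zero_right] at this
      exact this
    · intro y hy
      obtain ⟨z, hz⟩ := HelmholtzAux.exists_inner_eq h₁closed hp₁ hy
      have hzd : z ∈ A₁.adjoint.domain :=
        LinearPMap.mem_adjoint_domain_of_exists z ⟨y, fun x => (hz x).symm⟩
      exact ⟨⟨z, hzd⟩, LinearPMap.adjoint_apply_eq h₁dense ⟨z, hzd⟩ fun x => (hz x).symm⟩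
  have hR0 : LinearMap.range A₀.toFun = A₀.adjoint.kerSubᗮ := by
    apply le_antisymm
    · rintro _ ⟨x, rfl⟩
      rw [Submodule.mem_orthogonal]
      intro v hv
      exact (HelmholtzAux.mem_kerSub_adjoint_iff h₀dense).1 hv x
    · intro y hy
      obtain ⟨z, hz⟩ := HelmholtzAux.exists_inner_eq hcA hp₀ hy
      obtain ⟨x, -, hx⟩ := (LinearPMap.mem_graph_iff _).1
        (HelmholtzAux.mem_graph_of_inner_adjoint h₀dense h₀closed hz)
      exact ⟨x, hx⟩
  have hK0 : CompleteSpace A₀.adjoint.kerSub :=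
    (HelmholtzAux.isClosed_kerSub hcA).completeSpace_coe
  rw [hR0, hR1]
  refine ⟨Submodule.isClosed_orthogonal _, Submodule.isClosed_orthogonal _, ?_, ?_, ?_, ?_⟩
  · exact fun u hu v hv => (Submodule.mem_orthogonal' _ _).1 hu v hv.2
  · exact fun u hu w hw => (Submodule.mem_orthogonal _ _).1 hw u (hperp0 hu)
  · exact fun v hv w hw => (Submodule.mem_orthogonal _ _).1 hw v hv.1
  · rw [eq_top_iff]
    intro u _
    obtain ⟨n, hn, w, hw, rfl⟩ := A₁.kerSub.exists_add_mem_mem_orthogonal u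
    obtain ⟨v, hv, r, hr, rfl⟩ := A₀.adjoint.kerSub.exists_add_mem_mem_orthogonal n
    have hv1 : v ∈ A₁.kerSub := by
      simpa using A₁.kerSub.sub_mem hn (hperp0 hr)
    rw [add_comm v r]
    exact Submodule.add_mem_sup (Submodule.add_mem_sup hr ⟨hv1, hv⟩) hw
end
end

section
/- Let A₁ : D(A₁) ⊂ H₁ → H₂ be a densely defined closed linear operator between Hilbert spaces, let H₁⁺ be a regular subspace for A₁ with embedding ι₁, and let P : R(A₁) → H₁⁺ be a linear operator, bounded for the H₂-norm on R(A₁), such that A₁(ι₁(Pz)) = z for all z ∈ R(A₁) (a bounded regular potential operator). Define Q := P ∘ A₁ : D(A₁) → H₁⁺ and N := id − ι₁ ∘ Q : D(A₁) → H₁. Then: Q and N are bounded with respect to the graph norm on D(A₁); N maps D(A₁) into N(A₁); A₁(ι₁(Qx)) = A₁x for all x ∈ D(A₁); and the resulting decomposition is direct, i.e. ι₁(Q(D(A₁))) ∩ N(A₁) = {0}, so that D(A₁) = ι₁(Q(D(A₁))) ∔ N(A₁) as a direct sum. -/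
/-!
Everything follows from `A₁ ∘ ι₁ ∘ P = id` on `R(A₁)`, which for `Q = P ∘ A₁` reads
`A₁ (ι₁ (Q x)) = A₁ x`. Hence `x - ι₁ (Q x)` lies in the kernel, and if `ι₁ (Q x)` itself lies
in the kernel then `A₁ x = 0`, so `Q x = P 0 = 0`. The bounds come from the boundedness of `P`
and `ι₁` and the triangle inequality.
-/

open Filter Topology

noncomputable section

/-- `A x`, viewed as an element of the range of `A`. -/
def LinearPMap.rangeEl {𝕜 E F : Type*} [RCLike 𝕜] [NormedAddCommGroup E]
    [InnerProductSpace 𝕜 E] [NormedAddCommGroup F] [InnerProductSpace 𝕜 F]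
    (A : E →ₗ.[𝕜] F) (x : A.domain) : LinearMap.range A.toFun :=
  ⟨A x, LinearMap.mem_range_self A.toFun x⟩

/-- Let `A₁` be densely defined and closed, let `H₁p` be a regular subspace
for `A₁` (with embedding `ι₁`), and let `P : R(A₁) → H₁p` be a bounded regular potential
operator, i.e. `A₁ (ι₁ (P z)) = z` on `R(A₁)`.  With `Q := P ∘ A₁` and `N := id - ι₁ ∘ Q` one
has: `Q` and `N` are graph-norm bounded, `N` maps `D(A₁)` into `N(A₁)`,
`A₁ (ι₁ (Q x)) = A₁ x`, and the decomposition `D(A₁) = ι₁(Q(D(A₁))) ∔ N(A₁)` is direct. -/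
theorem weak_bounded_regular_decomposition_of_bounded_regular_potential
    {𝕜 H₁ H₂ H₁p : Type*} [RCLike 𝕜]
    [NormedAddCommGroup H₁] [InnerProductSpace 𝕜 H₁] [CompleteSpace H₁]
    [NormedAddCommGroup H₂] [InnerProductSpace 𝕜 H₂] [CompleteSpace H₂]
    [NormedAddCommGroup H₁p] [InnerProductSpace 𝕜 H₁p] [CompleteSpace H₁p]
    (A₁ : H₁ →ₗ.[𝕜] H₂)
    (h₁dense : Dense (A₁.domain : Set H₁)) (h₁closed : A₁.IsClosed)
    (ι₁ : H₁p →L[𝕜] H₁) (hι₁inj : Function.Injective ι₁)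
    (hι₁dom : ∀ u : H₁p, ι₁ u ∈ A₁.domain)
    (hι₁graph : ∃ C : ℝ, ∀ u : H₁p, ‖A₁ ⟨ι₁ u, hι₁dom u⟩‖ ≤ C * ‖u‖)
    (P : LinearMap.range A₁.toFun →ₗ[𝕜] H₁p)
    (hPbd : ∃ C : ℝ, ∀ z : LinearMap.range A₁.toFun, ‖P z‖ ≤ C * ‖(z : H₂)‖)
    (hP : ∀ z : LinearMap.range A₁.toFun, A₁ ⟨ι₁ (P z), hι₁dom (P z)⟩ = (z : H₂)) :
    (∃ C : ℝ, ∀ x : A₁.domain,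
      ‖P (A₁.rangeEl x)‖ ≤ C * (‖(x : H₁)‖ + ‖A₁ x‖)) ∧
    (∃ C : ℝ, ∀ x : A₁.domain,
      ‖(x : H₁) - ι₁ (P (A₁.rangeEl x))‖ ≤ C * (‖(x : H₁)‖ + ‖A₁ x‖)) ∧
    (∀ x : A₁.domain, (x : H₁) - ι₁ (P (A₁.rangeEl x)) ∈ A₁.kerSub) ∧
    (∀ x : A₁.domain,
      A₁ ⟨ι₁ (P (A₁.rangeEl x)), hι₁dom (P (A₁.rangeEl x))⟩ = A₁ x) ∧
    (∀ x : A₁.domain, ι₁ (P (A₁.rangeEl x)) ∈ A₁.kerSub →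
      ι₁ (P (A₁.rangeEl x)) = 0) := by
  have hAQ : ∀ x : A₁.domain,
      A₁ ⟨ι₁ (P (A₁.rangeEl x)), hι₁dom (P (A₁.rangeEl x))⟩ = A₁ x :=
    fun x => hP (A₁.rangeEl x)
  obtain ⟨C, hC⟩ := hPbd
  -- `C` may be negative, so `|C|` serves as the bound for `Q`.
  have hQ : ∀ x : A₁.domain, ‖P (A₁.rangeEl x)‖ ≤ |C| * (‖(x : H₁)‖ + ‖A₁ x‖) := by
    intro x
    calc ‖P (A₁.rangeEl x)‖ ≤ C * ‖A₁ x‖ := hC (A₁.rangeEl x)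
      _ ≤ |C| * ‖A₁ x‖ := by gcongr; exact le_abs_self C
      _ ≤ |C| * (‖(x : H₁)‖ + ‖A₁ x‖) := by
        gcongr
        exact le_add_of_nonneg_left (norm_nonneg _)
  refine ⟨⟨|C|, hQ⟩, ⟨1 + ‖ι₁‖ * |C|, fun x => ?_⟩, fun x => ?_, hAQ, fun x hx => ?_⟩
  · calc ‖(x : H₁) - ι₁ (P (A₁.rangeEl x))‖
        ≤ ‖(x : H₁)‖ + ‖ι₁ (P (A₁.rangeEl x))‖ := norm_sub_le _ _
      _ ≤ (‖(x : H₁)‖ + ‖A₁ x‖) + ‖ι₁‖ * (|C| * (‖(x : H₁)‖ + ‖A₁ x‖)) := by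
        gcongr
        · exact le_add_of_nonneg_right (norm_nonneg _)
        · exact ι₁.le_opNorm_of_le (hQ x)
      _ = (1 + ‖ι₁‖ * |C|) * (‖(x : H₁)‖ + ‖A₁ x‖) := by ring
  · refine Submodule.mem_map.mpr
      ⟨x - ⟨ι₁ (P (A₁.rangeEl x)), hι₁dom (P (A₁.rangeEl x))⟩, ?_, rfl⟩
    rw [LinearMap.mem_ker, map_sub]
    exact sub_eq_zero.mpr (hAQ x).symm
  · obtain ⟨y, hy, hyx⟩ := Submodule.mem_map.mp hx
    have hyeq : y = ⟨ι₁ (P (A₁.rangeEl x)), hι₁dom (P (A₁.rangeEl x))⟩ := Subtype.ext hyx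
    have hAx : A₁ x = 0 := by
      rw [← hAQ x, ← hyeq]
      exact hy
    have hz : A₁.rangeEl x = 0 := Subtype.ext hAx
    rw [hz, map_zero, map_zero]
end
end

section
/- Let A₀ : D(A₀) ⊂ H₀ → H₁ and A₁ : D(A₁) ⊂ H₁ → H₂ be densely defined closed linear operators between Hilbert spaces forming an exact complex, i.e. N(A₁) = R(A₀). Let H₁⁺ be a regular subspace for A₁ with embedding ι₁ and H₀⁺ a regular subspace for A₀ with embedding ι₀, and let P₁ : R(A₁) → H₁⁺ and P₀ : R(A₀) → H₀⁺ be bounded linear regular potential operators, i.e. A₁(ι₁(P₁z)) = z for all z ∈ R(A₁) and A₀(ι₀(P₀y)) = y for all y ∈ R(A₀). Then Q₁ := P₁ ∘ A₁ : D(A₁) → H₁⁺ and Q₀ := P₀ ∘ (id − ι₁ ∘ Q₁) : D(A₁) → H₀⁺ are well defined and bounded with respect to the graph norm on D(A₁), and the bounded regular decomposition x = ι₁(Q₁x) + A₀(ι₀(Q₀x)) holds for all x ∈ D(A₁); moreover A₁(ι₁(Q₁x)) = A₁x for all x ∈ D(A₁). -/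
/-!
Since `P₁` is a right inverse of `A₁ ∘ ι₁`, the element `ι₁ (Q₁ x)` with `Q₁ x = P₁ (A₁ x)` has the
same image under `A₁` as `x`. Hence `x - ι₁ (Q₁ x)` lies in `N(A₁) = R(A₀)`, where `P₀` is defined,
and `A₀ (ι₀ (P₀ y)) = y` for `y = x - ι₁ (Q₁ x)` is the decomposition. The graph-norm bounds follow
by composing the bounds of `P₁`, `ι₁` and `P₀`.
-/

open Filter Topology

noncomputable section

/-- Let `A₀, A₁` be densely defined closed operators forming an exact
complex (`N(A₁) = R(A₀)`), with regular subspaces `H₁p` (for `A₁`) and `H₀p` (for `A₀`) and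
bounded regular potential operators `P₁ : R(A₁) → H₁p` and `P₀ : R(A₀) → H₀p`.  Then
`Q₁ := P₁ ∘ A₁` and `Q₀ := P₀ ∘ (id - ι₁ ∘ Q₁)` are well defined and graph-norm bounded,
the bounded regular decomposition `x = ι₁ (Q₁ x) + A₀ (ι₀ (Q₀ x))` holds on `D(A₁)`, and
`A₁ (ι₁ (Q₁ x)) = A₁ x` for all `x ∈ D(A₁)`. -/
theorem bounded_regular_decomposition_of_bounded_regular_potentials
    {𝕜 H₀ H₁ H₂ H₀p H₁p : Type*} [RCLike 𝕜]
    [NormedAddCommGroup H₀] [InnerProductSpace 𝕜 H₀] [CompleteSpace H₀]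
    [NormedAddCommGroup H₁] [InnerProductSpace 𝕜 H₁] [CompleteSpace H₁]
    [NormedAddCommGroup H₂] [InnerProductSpace 𝕜 H₂] [CompleteSpace H₂]
    [NormedAddCommGroup H₀p] [InnerProductSpace 𝕜 H₀p] [CompleteSpace H₀p]
    [NormedAddCommGroup H₁p] [InnerProductSpace 𝕜 H₁p] [CompleteSpace H₁p]
    (A₀ : H₀ →ₗ.[𝕜] H₁) (A₁ : H₁ →ₗ.[𝕜] H₂)
    (h₀dense : Dense (A₀.domain : Set H₀)) (h₀closed : A₀.IsClosed)
    (h₁dense : Dense (A₁.domain : Set H₁)) (h₁closed : A₁.IsClosed)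
    (hexact : A₁.kerSub = LinearMap.range A₀.toFun)
    (ι₀ : H₀p →L[𝕜] H₀) (hι₀inj : Function.Injective ι₀)
    (hι₀dom : ∀ u : H₀p, ι₀ u ∈ A₀.domain)
    (hι₀graph : ∃ C : ℝ, ∀ u : H₀p, ‖A₀ ⟨ι₀ u, hι₀dom u⟩‖ ≤ C * ‖u‖)
    (ι₁ : H₁p →L[𝕜] H₁) (hι₁inj : Function.Injective ι₁)
    (hι₁dom : ∀ u : H₁p, ι₁ u ∈ A₁.domain)
    (hι₁graph : ∃ C : ℝ, ∀ u : H₁p, ‖A₁ ⟨ι₁ u, hι₁dom u⟩‖ ≤ C * ‖u‖)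
    (P₁ : LinearMap.range A₁.toFun →ₗ[𝕜] H₁p)
    (hP₁bd : ∃ C : ℝ, ∀ z : LinearMap.range A₁.toFun, ‖P₁ z‖ ≤ C * ‖(z : H₂)‖)
    (hP₁ : ∀ z : LinearMap.range A₁.toFun, A₁ ⟨ι₁ (P₁ z), hι₁dom (P₁ z)⟩ = (z : H₂))
    (P₀ : LinearMap.range A₀.toFun →ₗ[𝕜] H₀p)
    (hP₀bd : ∃ C : ℝ, ∀ y : LinearMap.range A₀.toFun, ‖P₀ y‖ ≤ C * ‖(y : H₁)‖)
    (hP₀ : ∀ y : LinearMap.range A₀.toFun, A₀ ⟨ι₀ (P₀ y), hι₀dom (P₀ y)⟩ = (y : H₁)) :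
    (∀ x : A₁.domain,
      (x : H₁) - ι₁ (P₁ (A₁.rangeEl x)) ∈ LinearMap.range A₀.toFun) ∧
    (∃ C : ℝ, ∀ x : A₁.domain,
      ‖P₁ (A₁.rangeEl x)‖ ≤ C * (‖(x : H₁)‖ + ‖A₁ x‖)) ∧
    (∃ C : ℝ, ∀ x : A₁.domain,
      ∀ h : (x : H₁) - ι₁ (P₁ (A₁.rangeEl x)) ∈ LinearMap.range A₀.toFun,
      ‖P₀ ⟨(x : H₁) - ι₁ (P₁ (A₁.rangeEl x)), h⟩‖ ≤ C * (‖(x : H₁)‖ + ‖A₁ x‖)) ∧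
    (∀ x : A₁.domain,
      ∀ h : (x : H₁) - ι₁ (P₁ (A₁.rangeEl x)) ∈ LinearMap.range A₀.toFun,
      (x : H₁) = ι₁ (P₁ (A₁.rangeEl x)) +
        A₀ ⟨ι₀ (P₀ ⟨(x : H₁) - ι₁ (P₁ (A₁.rangeEl x)), h⟩),
          hι₀dom (P₀ ⟨(x : H₁) - ι₁ (P₁ (A₁.rangeEl x)), h⟩)⟩) ∧
    (∀ x : A₁.domain,
      A₁ ⟨ι₁ (P₁ (A₁.rangeEl x)), hι₁dom (P₁ (A₁.rangeEl x))⟩ = A₁ x) := by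
  have hA : ∀ x : A₁.domain,
      A₁ ⟨ι₁ (P₁ (A₁.rangeEl x)), hι₁dom (P₁ (A₁.rangeEl x))⟩ = A₁ x :=
    fun x => hP₁ (A₁.rangeEl x)
  obtain ⟨C₁, hC₁⟩ := hP₁bd
  obtain ⟨C₀, hC₀⟩ := hP₀bd
  -- The given constants may be negative, so their absolute values are used.
  have hQ₁ : ∀ x : A₁.domain,
      ‖P₁ (A₁.rangeEl x)‖ ≤ |C₁| * (‖(x : H₁)‖ + ‖A₁ x‖) := fun x =>
    calc ‖P₁ (A₁.rangeEl x)‖ ≤ C₁ * ‖A₁ x‖ := hC₁ (A₁.rangeEl x)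
      _ ≤ |C₁| * (‖(x : H₁)‖ + ‖A₁ x‖) := by
        gcongr
        · exact le_abs_self C₁
        · exact le_add_of_nonneg_left (norm_nonneg _)
  refine ⟨fun x => ?_, ⟨|C₁|, hQ₁⟩, ⟨|C₀| * (1 + ‖ι₁‖ * |C₁|), fun x h => ?_⟩,
    fun x h => ?_, hA⟩
  · rw [← hexact]
    refine Submodule.mem_map.2
      ⟨x - ⟨ι₁ (P₁ (A₁.rangeEl x)), hι₁dom (P₁ (A₁.rangeEl x))⟩, ?_, rfl⟩
    rw [LinearMap.mem_ker, map_sub]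
    exact sub_eq_zero.2 (hA x).symm
  · have hx : ‖(x : H₁) - ι₁ (P₁ (A₁.rangeEl x))‖ ≤
        (1 + ‖ι₁‖ * |C₁|) * (‖(x : H₁)‖ + ‖A₁ x‖) :=
      calc ‖(x : H₁) - ι₁ (P₁ (A₁.rangeEl x))‖
          ≤ ‖(x : H₁)‖ + ‖ι₁ (P₁ (A₁.rangeEl x))‖ := norm_sub_le _ _
        _ ≤ (‖(x : H₁)‖ + ‖A₁ x‖) + ‖ι₁‖ * (|C₁| * (‖(x : H₁)‖ + ‖A₁ x‖)) :=
          add_le_add (le_add_of_nonneg_right (norm_nonneg _))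
            (ι₁.le_opNorm_of_le (hQ₁ x))
        _ = (1 + ‖ι₁‖ * |C₁|) * (‖(x : H₁)‖ + ‖A₁ x‖) := by ring
    calc ‖P₀ ⟨(x : H₁) - ι₁ (P₁ (A₁.rangeEl x)), h⟩‖
        ≤ C₀ * ‖(x : H₁) - ι₁ (P₁ (A₁.rangeEl x))‖ := hC₀ _
      _ ≤ |C₀| * ((1 + ‖ι₁‖ * |C₁|) * (‖(x : H₁)‖ + ‖A₁ x‖)) := by
        gcongr
        exact le_abs_self C₀
      _ = |C₀| * (1 + ‖ι₁‖ * |C₁|) * (‖(x : H₁)‖ + ‖A₁ x‖) := by ring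
  · rw [hP₀]
    exact (add_sub_cancel _ _).symm
end
end

section
/- Let A₀ : D(A₀) ⊂ H₀ → H₁ and A₁ : D(A₁) ⊂ H₁ → H₂ be densely defined closed linear operators between Hilbert spaces satisfying the complex property R(A₀) ⊂ N(A₁). Let H₀⁺ be a regular subspace for A₀ with embedding ι₀ and H₁⁺ a regular subspace for A₁ with embedding ι₁, and assume in addition that ι₀ : H₀⁺ → H₀ and ι₁ : H₁⁺ → H₁ are compact operators. Suppose there exist linear operators Q₁ : D(A₁) → H₁⁺ and Q₀ : D(A₁) → H₀⁺, bounded with respect to the graph norm ‖x‖_{H₁} + ‖A₁x‖_{H₂} on D(A₁), such that x = ι₁(Q₁x) + A₀(ι₀(Q₀x)) for all x ∈ D(A₁) (a bounded regular decomposition D(A₁) = H₁⁺ + A₀H₀⁺). Then the embedding D(A₁) ∩ D(A₀*) ↪ H₁ is compact: every sequence (xₙ) in D(A₁) ∩ D(A₀*) with supₙ(‖xₙ‖_{H₁} + ‖A₁xₙ‖_{H₂} + ‖A₀*xₙ‖_{H₀}) < ∞ has a subsequence converging in H₁. -/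
/-! The decomposition `z = ι₁ Q₁ z + A₀ ι₀ Q₀ z`, tested against `z ∈ D(A₁) ∩ D(A₀*)`, gives
`‖z‖² = ⟪z, ι₁ Q₁ z⟫ + ⟪A₀* z, ι₀ Q₀ z⟫ ≤ ‖z‖ ‖ι₁ Q₁ z‖ + ‖A₀* z‖ ‖ι₀ Q₀ z‖`
(`norm_sq_le_of_eq_add_apply`). For a bounded sequence `xₙ` the sequences `Q₁ xₙ`, `Q₀ xₙ` are
bounded, so by compactness of `ι₁`, `ι₀` both `ι₁ Q₁ xₙ` and `ι₀ Q₀ xₙ` converge along a common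
subsequence. The estimate applied to the differences `z = xₙ - xₘ`, for which `‖z‖` and `‖A₀* z‖`
stay bounded, shows that this subsequence is Cauchy (`cauchySeq_of_norm_sq_sub_le`). -/

open Filter Topology

noncomputable section

theorem norm_sq_le_of_eq_add_apply {𝕜 E F : Type*} [RCLike 𝕜]
    [NormedAddCommGroup E] [InnerProductSpace 𝕜 E] [CompleteSpace E]
    [NormedAddCommGroup F] [InnerProductSpace 𝕜 F]
    (A : E →ₗ.[𝕜] F) (hA : Dense (A.domain : Set E))
    (z : A.adjoint.domain) (p : F) (w : A.domain) (hz : (z : F) = p + A w) :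
    ‖(z : F)‖ ^ 2 ≤ ‖(z : F)‖ * ‖p‖ + ‖A.adjoint z‖ * ‖(w : E)‖ := by
  have hadj : inner 𝕜 (A.adjoint z) (w : E) = inner 𝕜 (z : F) (A w) :=
    A.adjoint_isFormalAdjoint hA z w
  have h : inner 𝕜 (z : F) (z : F) = inner 𝕜 (z : F) p + inner 𝕜 (A.adjoint z) (w : E) := by
    rw [hadj, ← inner_add_right, ← hz]
  calc ‖(z : F)‖ ^ 2 = ‖inner 𝕜 (z : F) (z : F)‖ := by
        rw [inner_self_eq_norm_sq_to_K]; simp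
    _ ≤ ‖inner 𝕜 (z : F) p‖ + ‖inner 𝕜 (A.adjoint z) (w : E)‖ := by
        rw [h]; exact norm_add_le _ _
    _ ≤ _ := add_le_add (norm_inner_le_norm _ _) (norm_inner_le_norm _ _)

theorem cauchySeq_of_norm_sq_sub_le {E F G : Type*} [NormedAddCommGroup E]
    [NormedAddCommGroup F] [NormedAddCommGroup G] {y : ℕ → E} {a : ℕ → F} {b : ℕ → G}
    (ha : CauchySeq a) (hb : CauchySeq b) {K : ℝ} (hK : 0 ≤ K)
    (h : ∀ m n, ‖y m - y n‖ ^ 2 ≤ K * (‖a m - a n‖ + ‖b m - b n‖)) : CauchySeq y := by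
  rw [Metric.cauchySeq_iff] at ha hb ⊢
  intro ε hε
  -- `δ` is chosen so that `K * (δ + δ) < ε ^ 2`, also when `K = 0`.
  set δ : ℝ := ε ^ 2 / (2 * K + 1) with hδ
  have hδ0 : 0 < δ := by positivity
  have hδε : δ * (2 * K + 1) = ε ^ 2 := div_mul_cancel₀ _ (by positivity)
  obtain ⟨N₁, hN₁⟩ := ha δ hδ0
  obtain ⟨N₂, hN₂⟩ := hb δ hδ0
  refine ⟨max N₁ N₂, fun m hm n hn => ?_⟩
  have h1 := hN₁ m (le_of_max_le_left hm) n (le_of_max_le_left hn)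
  have h2 := hN₂ m (le_of_max_le_right hm) n (le_of_max_le_right hn)
  rw [dist_eq_norm] at h1 h2 ⊢
  have h3 : K * (‖a m - a n‖ + ‖b m - b n‖) ≤ K * (δ + δ) := by gcongr
  refine lt_of_pow_lt_pow_left₀ 2 hε.le ?_
  linarith [h m n]

/-- Let `A₀, A₁` be a Hilbert complex (`R(A₀) ⊆ N(A₁)`), with regular
subspaces `H₀p` (for `A₀`) and `H₁p` (for `A₁`) whose embeddings `ι₀, ι₁` are compact, and
assume a bounded regular decomposition `D(A₁) = H₁p + A₀ H₀p` given by graph-norm bounded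
operators `Q₁, Q₀`.  Then the embedding `D(A₁) ∩ D(A₀*) ↪ H₁` is compact. -/
theorem compact_embedding_of_bounded_regular_decomposition
    {𝕜 H₀ H₁ H₂ H₀p H₁p : Type*} [RCLike 𝕜]
    [NormedAddCommGroup H₀] [InnerProductSpace 𝕜 H₀] [CompleteSpace H₀]
    [NormedAddCommGroup H₁] [InnerProductSpace 𝕜 H₁] [CompleteSpace H₁]
    [NormedAddCommGroup H₂] [InnerProductSpace 𝕜 H₂] [CompleteSpace H₂]
    [NormedAddCommGroup H₀p] [InnerProductSpace 𝕜 H₀p] [CompleteSpace H₀p]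
    [NormedAddCommGroup H₁p] [InnerProductSpace 𝕜 H₁p] [CompleteSpace H₁p]
    (A₀ : H₀ →ₗ.[𝕜] H₁) (A₁ : H₁ →ₗ.[𝕜] H₂)
    (h₀dense : Dense (A₀.domain : Set H₀)) (h₀closed : A₀.IsClosed)
    (h₁dense : Dense (A₁.domain : Set H₁)) (h₁closed : A₁.IsClosed)
    (hcomplex : LinearMap.range A₀.toFun ≤ A₁.kerSub)
    (ι₀ : H₀p →L[𝕜] H₀) (hι₀inj : Function.Injective ι₀)
    (hι₀dom : ∀ u : H₀p, ι₀ u ∈ A₀.domain)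
    (hι₀graph : ∃ C : ℝ, ∀ u : H₀p, ‖A₀ ⟨ι₀ u, hι₀dom u⟩‖ ≤ C * ‖u‖)
    (hι₀cpt : ∀ u : ℕ → H₀p, (∃ C : ℝ, ∀ n, ‖u n‖ ≤ C) →
      ∃ φ : ℕ → ℕ, StrictMono φ ∧
        ∃ l : H₀, Tendsto (fun n => ι₀ (u (φ n))) atTop (𝓝 l))
    (ι₁ : H₁p →L[𝕜] H₁) (hι₁inj : Function.Injective ι₁)
    (hι₁dom : ∀ u : H₁p, ι₁ u ∈ A₁.domain)
    (hι₁graph : ∃ C : ℝ, ∀ u : H₁p, ‖A₁ ⟨ι₁ u, hι₁dom u⟩‖ ≤ C * ‖u‖)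
    (hι₁cpt : ∀ u : ℕ → H₁p, (∃ C : ℝ, ∀ n, ‖u n‖ ≤ C) →
      ∃ φ : ℕ → ℕ, StrictMono φ ∧
        ∃ l : H₁, Tendsto (fun n => ι₁ (u (φ n))) atTop (𝓝 l))
    (Q₁ : A₁.domain →ₗ[𝕜] H₁p) (Q₀ : A₁.domain →ₗ[𝕜] H₀p)
    (hQ₁bd : ∃ C : ℝ, ∀ x : A₁.domain, ‖Q₁ x‖ ≤ C * (‖(x : H₁)‖ + ‖A₁ x‖))
    (hQ₀bd : ∃ C : ℝ, ∀ x : A₁.domain, ‖Q₀ x‖ ≤ C * (‖(x : H₁)‖ + ‖A₁ x‖))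
    (hdeco : ∀ x : A₁.domain,
      (x : H₁) = ι₁ (Q₁ x) + A₀ ⟨ι₀ (Q₀ x), hι₀dom (Q₀ x)⟩) :
    ∀ x : ℕ → H₁, ∀ (h₁ : ∀ n, x n ∈ A₁.domain) (h₂ : ∀ n, x n ∈ A₀.adjoint.domain),
      (∃ C : ℝ, ∀ n,
        ‖x n‖ + ‖A₁ ⟨x n, h₁ n⟩‖ + ‖A₀.adjoint ⟨x n, h₂ n⟩‖ ≤ C) →
      ∃ φ : ℕ → ℕ, StrictMono φ ∧
        ∃ l : H₁, Tendsto (fun n => x (φ n)) atTop (𝓝 l) := by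
  rintro x h₁ h₂ ⟨C, hC⟩
  obtain ⟨C₁, hC₁⟩ := hQ₁bd
  obtain ⟨C₀, hC₀⟩ := hQ₀bd
  have hx : ∀ n, ‖x n‖ ≤ C := fun n => by
    linarith [hC n, norm_nonneg (A₁ ⟨x n, h₁ n⟩), norm_nonneg (A₀.adjoint ⟨x n, h₂ n⟩)]
  have hA₁x : ∀ n, ‖x n‖ + ‖A₁ ⟨x n, h₁ n⟩‖ ≤ C := fun n => by
    linarith [hC n, norm_nonneg (A₀.adjoint ⟨x n, h₂ n⟩)]
  have hA₀x : ∀ n, ‖A₀.adjoint ⟨x n, h₂ n⟩‖ ≤ C := fun n => by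
    linarith [hC n, norm_nonneg (A₁ ⟨x n, h₁ n⟩), norm_nonneg (x n)]
  have hC0 : 0 ≤ C := (norm_nonneg _).trans (hx 0)
  -- The constants `C₁`, `C₀` carry no sign, hence the absolute values.
  have hQ₁ : ∀ n, ‖Q₁ ⟨x n, h₁ n⟩‖ ≤ |C₁| * C := fun n =>
    (hC₁ _).trans (mul_le_mul (le_abs_self _) (hA₁x n) (by positivity) (abs_nonneg _))
  have hQ₀ : ∀ n, ‖Q₀ ⟨x n, h₁ n⟩‖ ≤ |C₀| * C := fun n =>
    (hC₀ _).trans (mul_le_mul (le_abs_self _) (hA₁x n) (by positivity) (abs_nonneg _))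
  obtain ⟨φ, hφ, l₁, hl₁⟩ := hι₁cpt (fun n => Q₁ ⟨x n, h₁ n⟩) ⟨_, hQ₁⟩
  obtain ⟨ψ, hψ, l₀, hl₀⟩ :=
    hι₀cpt (fun n => Q₀ ⟨x (φ n), h₁ (φ n)⟩) ⟨_, fun n => hQ₀ (φ n)⟩
  refine ⟨φ ∘ ψ, hφ.comp hψ, cauchySeq_tendsto_of_complete ?_⟩
  refine cauchySeq_of_norm_sq_sub_le (hl₁.comp hψ.tendsto_atTop).cauchySeq hl₀.cauchySeq
    (K := 2 * C) (by positivity) fun m n => ?_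
  simp only [Function.comp_apply]
  set i := φ (ψ m)
  set j := φ (ψ n)
  set u : A₁.domain := ⟨x i, h₁ i⟩ - ⟨x j, h₁ j⟩ with hu
  set z : A₀.adjoint.domain := ⟨x i, h₂ i⟩ - ⟨x j, h₂ j⟩ with hz
  have key := norm_sq_le_of_eq_add_apply A₀ h₀dense z (ι₁ (Q₁ u)) ⟨ι₀ (Q₀ u), hι₀dom _⟩ (hdeco u)
  have hzn : ‖(z : H₁)‖ ≤ 2 * C := by
    have : ‖x i - x j‖ ≤ ‖x i‖ + ‖x j‖ := norm_sub_le _ _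
    change ‖x i - x j‖ ≤ _
    linarith [hx i, hx j]
  have hAzn : ‖A₀.adjoint z‖ ≤ 2 * C := by
    rw [hz, LinearPMap.map_sub]
    refine (norm_sub_le _ _).trans ?_
    linarith [hA₀x i, hA₀x j]
  have e₁ : ι₁ (Q₁ u) = ι₁ (Q₁ ⟨x i, h₁ i⟩) - ι₁ (Q₁ ⟨x j, h₁ j⟩) := by
    rw [hu, map_sub, map_sub]
  have e₀ : ι₀ (Q₀ u) = ι₀ (Q₀ ⟨x i, h₁ i⟩) - ι₀ (Q₀ ⟨x j, h₁ j⟩) := by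
    rw [hu, map_sub, map_sub]
  rw [← e₁, ← e₀, mul_add]
  exact key.trans (by gcongr)
end
end
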